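/- Let (λ_n)_{n≥1} be positive real numbers satisfying (i) Σ_{n≥1} 1/λ_n = +∞ and (ii) the doubling condition: there exists C > 1 such that C⁻¹ λ_n ≤ λ_k ≤ C λ_n whenever n ≥ 1 and n ≤ k ≤ 2n; assume also λ_n ≥ 1 for all n. Let X be the complete metric space whose points are pairs (f, E) with f ∈ L²(𝕋, m), 0 ≤ f ≤ 2 m-a.e., ‖f‖_{ℓ²(λ)} < ∞, and E ⊆ 𝕋 a nonempty compact set containing the support of the measure f·m, equipped with the metric d_λ((f,E),(g,K)) = ‖f − g‖_{ℓ²(λ)} + d_𝒞(E,K). Then the set of pairs (f, E) ∈ X such that E has empty interior in 𝕋 is comeagre (residual) in X; in particular it contains a dense intersection of countably many open dense subsets of X. -/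

import Mathlib

open MeasureTheory Filter Topology

noncomputable section

/-- Normalized Haar (arc-length) probability measure on the circle `𝕋 = ℝ/ℤ`. -/
def hm : Measure UnitAddCircle := AddCircle.haarAddCircle

/-- Fourier coefficients of a real-valued function on the circle. -/
def fc (f : UnitAddCircle → ℝ) (n : ℤ) : ℂ := fourierCoeff (fun x => (f x : ℂ)) n

/-- The support of the measure `f·m`: the complement of the largest open set on which `f`
vanishes `m`-a.e. -/
def measSupport (f : UnitAddCircle → ℝ) : Set UnitAddCircle :=
  (⋃₀ {U : Set UnitAddCircle | IsOpen U ∧ ∀ᵐ x ∂hm, x ∈ U → f x = 0})ᶜ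

/-- The Hausdorff-type metric `d_𝒞(E,K) = sup_{ζ∈E} dist(ζ,K) + sup_{ξ∈K} dist(ξ,E)` on
nonempty compact subsets of the circle. -/
def dC (E K : Set UnitAddCircle) : ℝ :=
  (⨆ x : E, Metric.infDist (x : UnitAddCircle) K) +
    ⨆ y : K, Metric.infDist (y : UnitAddCircle) E

/-- The weighted `ℓ²(λ)` distance `‖f − g‖_{ℓ²(λ)}`. -/
def dlam (lam : ℕ → ℝ) (f g : UnitAddCircle → ℝ) : ℝ :=
  Real.sqrt (∑' n : ℤ, ‖fc f n - fc g n‖ ^ 2 * lam n.natAbs)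

/-- A point of the complete metric space `X`: a pair `(f, E)` with `f ∈ L²(𝕋)`,
`0 ≤ f ≤ 2` a.e., `‖f‖_{ℓ²(λ)} < ∞`, and `E ⊆ 𝕋` a nonempty compact set containing the
support of the measure `f·m`. -/
structure LPair (lam : ℕ → ℝ) where
  f : UnitAddCircle → ℝ
  E : Set UnitAddCircle
  memLp : MemLp f 2 hm
  bdd : ∀ᵐ x ∂hm, 0 ≤ f x ∧ f x ≤ 2
  sum : Summable (fun n : ℤ => ‖fc f n‖ ^ 2 * lam n.natAbs)
  cpt : IsCompact E
  nonempty : E.Nonempty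
  supp : measSupport f ⊆ E

/-- The metric `d_λ((f,E),(g,K)) = ‖f − g‖_{ℓ²(λ)} + d_𝒞(E,K)` on pairs. -/
def dPair (lam : ℕ → ℝ) (p q : LPair lam) : ℝ :=
  dlam lam p.f q.f + dC p.E q.E

/-!
For a fixed point `x₀` of the circle, the pairs with `x₀ ∉ E` form an open set. If `E` misses every
point of a dense sequence, then it has empty interior, so by Baire's theorem in the complete space
`X` it suffices that each of these open sets is dense.

To approximate `(f, E)` by such a pair, mollify `f` to a smooth `u`, pass to
`(1 + s)⁻¹ * u * (1 - ψ)`, where the cutoff `ψ` equals `1` near `x₀`, satisfies `-s ≤ ψ ≤ 1` and has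
small norm in `ℓ²(λ)`, and cut a small ball around `x₀` out of a thickening of `E`.

The cutoff is an average `(∑ w_j g(A^j ‖x - x₀‖)) / ∑ w_j` with `w_j = min 1 (A^j / λ_{A^j})`. The
bump `g` is chosen with a Fourier transform that is small both at `0` and at infinity, so that the
terms live at essentially different frequencies and the squared norm of the average is
`O(1 / ∑ w_j)`. This tends to `0`, because under the doubling condition `∑ A^j / λ_{A^j}` diverges
together with `∑ 1 / λ_n`. Such a `g` has mean zero and so takes negative values, but for large `A`
it does so on disjoint annuli at different scales, whence `ψ ≥ -1 / ∑ w_j`.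
-/

section Weights

/-- Moderate weights: the ratio of the values at `k` and at `n` is at most a constant times the
`M`-th power of the ratio of the indices. Indices are shifted by one so that `0` is allowed. -/
def IsModerate (lam : ℕ → ℝ) (C : ℝ) (M : ℕ) : Prop :=
  ∀ n k : ℕ, lam k ≤ C * max ((k + 1 : ℝ) / (n + 1)) ((n + 1) / (k + 1)) ^ M * lam n

variable {lam : ℕ → ℝ} {C : ℝ} {M : ℕ}

lemma exists_doubling_from_zero (hlam : ∀ n, 0 < lam n) (hC : 1 < C)
    (hdbl : ∀ n k : ℕ, 1 ≤ n → n ≤ k → k ≤ 2 * n → C⁻¹ * lam n ≤ lam k ∧ lam k ≤ C * lam n) :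
    ∃ D : ℝ, 1 ≤ D ∧
      ∀ n k : ℕ, n ≤ k → k ≤ 2 * n + 1 → lam k ≤ D * lam n ∧ lam n ≤ D * lam k := by
  have hC₀ : 0 < C := by linarith
  have h₀ := hlam 0
  have h₁ := hlam 1
  have hr₀ : 0 < lam 0 / lam 1 := by positivity
  have hr₁ : 0 < lam 1 / lam 0 := by positivity
  have hdbl' (n k : ℕ) (hn : 1 ≤ n) (hnk : n ≤ k) (hk : k ≤ 2 * n) :
      lam k ≤ C * lam n ∧ lam n ≤ C * lam k :=
    ⟨(hdbl n k hn hnk hk).2, (inv_mul_le_iff₀ hC₀).1 (hdbl n k hn hnk hk).1⟩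
  refine ⟨C ^ 2 + lam 0 / lam 1 + lam 1 / lam 0, by nlinarith, fun n k hnk hk => ?_⟩
  have hk₀ := hlam k
  have hn₀ := hlam n
  rcases hnk.eq_or_lt with rfl | hlt
  · constructor <;> refine le_mul_of_one_le_left hn₀.le ?_ <;> nlinarith
  rcases n.eq_zero_or_pos with rfl | hn
  · obtain rfl : k = 1 := by omega
    constructor
    · calc lam 1 = lam 1 / lam 0 * lam 0 := by field_simp
        _ ≤ _ := by gcongr; nlinarith
    · calc lam 0 = lam 0 / lam 1 * lam 1 := by field_simp
        _ ≤ _ := by gcongr; nlinarith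
  · obtain ⟨h₁, h₂⟩ := hdbl' n (n + 1) hn (by omega) (by omega)
    obtain ⟨h₃, h₄⟩ := hdbl' (n + 1) k (by omega) (by omega) (by omega)
    have hC₂ : C * C ≤ C ^ 2 + lam 0 / lam 1 + lam 1 / lam 0 := by nlinarith
    constructor
    · calc lam k ≤ C * (C * lam n) := h₃.trans (by gcongr)
        _ = C * C * lam n := by ring
        _ ≤ _ := by gcongr
    · calc lam n ≤ C * (C * lam k) := h₂.trans (by gcongr)
        _ = C * C * lam k := by ring
        _ ≤ _ := by gcongr

lemma le_pow_mul_of_doubling {D : ℝ} (hD : 0 ≤ D)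
    (hdbl : ∀ n k : ℕ, n ≤ k → k ≤ 2 * n + 1 → lam k ≤ D * lam n ∧ lam n ≤ D * lam k)
    (i n k : ℕ) (hnk : n ≤ k) (hk : k + 1 ≤ 2 ^ i * (n + 1)) :
    lam k ≤ D ^ i * lam n ∧ lam n ≤ D ^ i * lam k := by
  induction i generalizing n with
  | zero =>
    obtain rfl : n = k := by omega
    simp
  | succ i ih =>
    obtain ⟨h₁, h₂⟩ := hdbl n (min k (2 * n + 1)) (by omega) (by omega)
    obtain ⟨h₃, h₄⟩ := ih (min k (2 * n + 1)) (min_le_left _ _) (by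
      rcases min_cases k (2 * n + 1) with ⟨h, -⟩ | ⟨h, -⟩ <;> rw [h]
      · exact Nat.le_mul_of_pos_left _ (by positivity)
      · rw [pow_succ] at hk
        linarith)
    constructor
    · calc lam k ≤ D ^ i * (D * lam n) := h₃.trans (by gcongr)
        _ = D ^ (i + 1) * lam n := by ring
    · calc lam n ≤ D * (D ^ i * lam k) := h₂.trans (by gcongr)
        _ = D ^ (i + 1) * lam k := by ring

lemma exists_isModerate (hlam : ∀ n, 0 < lam n) (hC : 1 < C)
    (hdbl : ∀ n k : ℕ, 1 ≤ n → n ≤ k → k ≤ 2 * n → C⁻¹ * lam n ≤ lam k ∧ lam k ≤ C * lam n) :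
    ∃ D M, 0 < D ∧ IsModerate lam D M := by
  obtain ⟨D, hD, hdbl'⟩ := exists_doubling_from_zero hlam hC hdbl
  obtain ⟨M, hM⟩ := pow_unbounded_of_one_lt D one_lt_two
  have ratio (n k : ℕ) (hnk : n ≤ k) :
      lam k ≤ D * ((k + 1 : ℝ) / (n + 1)) ^ M * lam n ∧
        lam n ≤ D * ((k + 1 : ℝ) / (n + 1)) ^ M * lam k := by
    obtain ⟨i, hi, hi'⟩ := exists_nat_pow_near
      ((one_le_div₀ (by positivity)).2 (by gcongr) : 1 ≤ (k + 1 : ℝ) / (n + 1)) one_lt_two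
    have hpow : D ^ (i + 1) ≤ D * ((k + 1 : ℝ) / (n + 1)) ^ M := by
      calc D ^ (i + 1) = D * D ^ i := pow_succ' D i
        _ ≤ D * ((2 : ℝ) ^ M) ^ i := by gcongr
        _ = D * ((2 : ℝ) ^ i) ^ M := by rw [pow_right_comm]
        _ ≤ _ := by gcongr
    rw [div_lt_iff₀ (by positivity)] at hi'
    obtain ⟨h₁, h₂⟩ := le_pow_mul_of_doubling (by linarith) hdbl' (i + 1) n k hnk
      (by exact_mod_cast hi'.le)
    exact ⟨h₁.trans (mul_le_mul_of_nonneg_right hpow (hlam n).le),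
      h₂.trans (mul_le_mul_of_nonneg_right hpow (hlam k).le)⟩
  refine ⟨D, M, by linarith, fun n k => ?_⟩
  have hn := hlam n
  rcases le_total n k with hnk | hkn
  · refine (ratio n k hnk).1.trans ?_
    gcongr
    exact le_max_left _ _
  · refine (ratio k n hkn).2.trans ?_
    gcongr
    exact le_max_right _ _

lemma IsModerate.le_mul_shift (h : IsModerate lam C M) (hlam : ∀ n, 0 ≤ lam n) (hC : 0 ≤ C)
    (n k : ℤ) : lam n.natAbs ≤ C * (1 + |(k : ℝ)|) ^ M * lam (n - k).natAbs := by
  have hquot {a b : ℤ} (hab : |a| ≤ |b| + |k|) :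
      ((a.natAbs : ℝ) + 1) / (b.natAbs + 1) ≤ 1 + |(k : ℝ)| := by
    have hab' : |(a : ℝ)| ≤ |(b : ℝ)| + |(k : ℝ)| := by exact_mod_cast hab
    rw [div_le_iff₀ (by positivity), Nat.cast_natAbs, Nat.cast_natAbs, Int.cast_abs, Int.cast_abs]
    nlinarith [mul_nonneg (abs_nonneg (k : ℝ)) (abs_nonneg (b : ℝ))]
  have := hlam (n - k).natAbs
  refine (h (n - k).natAbs n.natAbs).trans ?_
  gcongr
  exact max_le (hquot (by simpa using abs_add_le (n - k) k)) (hquot (abs_sub _ _))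

lemma IsModerate.sum_one_div_le (h : IsModerate lam C M) (hlam : ∀ n, 0 < lam n) (hC : 0 ≤ C)
    {A : ℕ} (hA : 1 ≤ A) (j : ℕ) :
    ∑ n ∈ Finset.Ico (A ^ j) (A ^ (j + 1)), 1 / lam n ≤
      C * A ^ (M + 1) * ((A : ℝ) ^ j / lam (A ^ j)) := by
  have hj := hlam (A ^ j)
  have hA' : (1 : ℝ) ≤ A := by exact_mod_cast hA
  have hterm : ∀ n ∈ Finset.Ico (A ^ j) (A ^ (j + 1)), 1 / lam n ≤ C * A ^ M / lam (A ^ j) := by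
    intro n hn
    obtain ⟨h₁, h₂⟩ := Finset.mem_Ico.1 hn
    have hn₀ := hlam n
    have h₁' : (A : ℝ) ^ j ≤ n := by exact_mod_cast h₁
    have h₂' : (n : ℝ) ≤ A ^ j * A := by rw [← pow_succ]; exact_mod_cast h₂.le
    rw [div_le_div_iff₀ hn₀ hj, one_mul]
    refine (h n (A ^ j)).trans ?_
    gcongr
    push_cast
    refine max_le ?_ ?_ <;> rw [div_le_iff₀ (by positivity)] <;> nlinarith
  refine (Finset.sum_le_card_nsmul _ _ _ hterm).trans ?_
  have hcard : ((A ^ (j + 1) - A ^ j : ℕ) : ℝ) ≤ (A : ℝ) ^ (j + 1) := by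
    exact_mod_cast Nat.sub_le _ _
  rw [Nat.card_Ico, nsmul_eq_mul]
  calc _ ≤ (A : ℝ) ^ (j + 1) * (C * A ^ M / lam (A ^ j)) := by gcongr
    _ = _ := by ring

lemma IsModerate.not_summable_lacunary (h : IsModerate lam C M) (hlam : ∀ n, 0 < lam n)
    (hC : 0 ≤ C) (hdiv : ¬ Summable fun n : ℕ => 1 / lam (n + 1)) {A : ℕ} (hA : 2 ≤ A) :
    ¬ Summable fun j : ℕ => (A : ℝ) ^ j / lam (A ^ j) := by
  intro hs
  have hA₁ : 1 ≤ A := by omega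
  have hblocks (J : ℕ) : ∑ n ∈ Finset.Ico 1 (A ^ J), 1 / lam n ≤
      C * A ^ (M + 1) * ∑ j ∈ Finset.range J, (A : ℝ) ^ j / lam (A ^ j) := by
    induction J with
    | zero => simp
    | succ J ih =>
      rw [← Finset.sum_Ico_consecutive _ (Nat.one_le_pow J A hA₁)
        (Nat.pow_le_pow_right hA₁ J.le_succ), Finset.sum_range_succ, mul_add]
      exact add_le_add ih (h.sum_one_div_le hlam hC hA₁ J)
  refine hdiv (summable_of_sum_range_le
    (c := C * A ^ (M + 1) * ∑' j : ℕ, (A : ℝ) ^ j / lam (A ^ j))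
    (fun n => (one_div_pos.2 (hlam _)).le) fun n => ?_)
  calc ∑ i ∈ Finset.range n, 1 / lam (i + 1)
      = ∑ i ∈ Finset.Ico 1 (n + 1), 1 / lam i := by
        simp only [Finset.sum_Ico_eq_sum_range, add_tsub_cancel_right, add_comm]
    _ ≤ ∑ i ∈ Finset.Ico 1 (A ^ (n + 1)), 1 / lam i :=
        Finset.sum_le_sum_of_subset_of_nonneg
          (Finset.Ico_subset_Ico_right (Nat.lt_pow_self hA).le)
          fun i _ _ => (one_div_pos.2 (hlam i)).le
    _ ≤ _ := hblocks _
    _ ≤ _ := by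
        gcongr
        exact hs.sum_le_tsum _ fun j _ => div_nonneg (by positivity) (hlam _).le

lemma summable_of_summable_min_one {w : ℕ → ℝ} (hw : Summable fun j => min 1 (w j)) :
    Summable w := by
  have hlt : ∀ᶠ j in atTop, min 1 (w j) < 1 :=
    hw.tendsto_atTop_zero.eventually (gt_mem_nhds one_pos)
  obtain ⟨J, hJ⟩ := eventually_atTop.1 hlt
  rw [← summable_nat_add_iff J] at hw ⊢
  exact hw.congr fun j => min_eq_right
    ((min_lt_iff.1 (hJ (j + J) (Nat.le_add_left _ _))).resolve_left (lt_irrefl 1)).le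

end Weights

section Plateau

open scoped FourierTransform ContDiff

/-- A plateau function: smooth, even, bounded by one, equal to `1` on `[-r, r]` and to `0` off
`(-R, R)`. No sign is prescribed, so that the Fourier transform may vanish at `0`. -/
structure IsPlateau (g : ℝ → ℝ) (r R : ℝ) : Prop where
  contDiff : ContDiff ℝ ∞ g
  even : ∀ x, g (-x) = g x
  abs_le_one : ∀ x, |g x| ≤ 1
  inner_pos : 0 < r
  eq_one : ∀ x, |x| ≤ r → g x = 1
  eq_zero : ∀ x, R ≤ |x| → g x = 0

lemma exists_isPlateau_nonneg : ∃ g : ℝ → ℝ, IsPlateau g 1 2 ∧ ∀ x, 0 ≤ g x := by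
  let b : ContDiffBump (0 : ℝ) := ⟨1, 2, one_pos, one_lt_two⟩
  exact ⟨b, ⟨b.contDiff, b.neg, fun x => (abs_of_nonneg b.nonneg).trans_le b.le_one, one_pos,
    fun x hx => b.one_of_mem_closedBall (by simpa [b] using hx),
    fun x hx => b.zero_of_le_dist (by simpa [b] using hx)⟩, fun x => b.nonneg⟩

namespace IsPlateau

variable {g : ℝ → ℝ} {r R : ℝ}

lemma inner_lt_outer (hg : IsPlateau g r R) : r < R := by
  by_contra! hle
  have h₁ := hg.eq_one r (abs_of_pos hg.inner_pos).le
  rw [hg.eq_zero r (hle.trans (le_abs_self r))] at h₁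
  exact zero_ne_one h₁

lemma hasCompactSupport (hg : IsPlateau g r R) : HasCompactSupport g := by
  refine .of_support_subset_isCompact (isCompact_closedBall (0 : ℝ) R) fun x hx => ?_
  rw [mem_closedBall_zero_iff, Real.norm_eq_abs]
  by_contra! hR
  exact hx (hg.eq_zero x hR.le)

lemma integrable (hg : IsPlateau g r R) : Integrable g :=
  hg.contDiff.continuous.integrable_of_hasCompactSupport hg.hasCompactSupport

/-- A plateau function as a complex-valued Schwartz function. -/
def toSchwartzMap (hg : IsPlateau g r R) : SchwartzMap ℝ ℂ :=
  HasCompactSupport.toSchwartzMap (f := fun x => (g x : ℂ))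
    (hg.hasCompactSupport.comp_left Complex.ofReal_zero)
    (Complex.ofRealCLM.contDiff.comp hg.contDiff)

lemma fourier_toSchwartzMap (hg : IsPlateau g r R) :
    (𝓕 hg.toSchwartzMap : SchwartzMap ℝ ℂ) = 𝓕 fun x => (g x : ℂ) :=
  SchwartzMap.fourier_coe _

lemma continuous_fourier (hg : IsPlateau g r R) : Continuous (𝓕 fun x => (g x : ℂ)) :=
  hg.fourier_toSchwartzMap ▸ (𝓕 hg.toSchwartzMap : SchwartzMap ℝ ℂ).continuous

lemma exists_abs_pow_mul_fourier_le (hg : IsPlateau g r R) (K : ℕ) :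
    ∃ B : ℝ, 0 < B ∧ ∀ ξ, |ξ| ^ K * ‖𝓕 (fun x => (g x : ℂ)) ξ‖ ≤ B := by
  simpa only [norm_iteratedFDeriv_zero, hg.fourier_toSchwartzMap, Real.norm_eq_abs] using
    (𝓕 hg.toSchwartzMap : SchwartzMap ℝ ℂ).decay K 0

end IsPlateau

/-- The symmetric second difference of `g` with step `h`, normalised so that it agrees with `g`
where both translates vanish. It multiplies the Fourier transform by `1 - cos (2πhξ) = O(ξ²)`. -/
def secondDifference (h : ℝ) (g : ℝ → ℝ) (x : ℝ) : ℝ := g x - (g (x + h) + g (x + -h)) / 2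

lemma fourier_secondDifference {g : ℝ → ℝ} (hg : Integrable g) (h ξ : ℝ) :
    𝓕 (fun x => (secondDifference h g x : ℂ)) ξ =
      (1 - Real.cos (2 * Real.pi * h * ξ) : ℝ) * 𝓕 (fun x => (g x : ℂ)) ξ := by
  have hint (a : ℝ) :
      Integrable fun x : ℝ => Complex.exp (↑(-2 * Real.pi * x * ξ) * Complex.I) * g (x + a) := by
    refine (hg.comp_add_right a).ofReal.bdd_mul (c := 1) (by fun_prop) ?_
    exact Eventually.of_forall fun x => (Complex.norm_exp_ofReal_mul_I _).le
  have hshift (a : ℝ) : ∫ x : ℝ, Complex.exp (↑(-2 * Real.pi * x * ξ) * Complex.I) * g (x + a) =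
      Complex.exp (↑(2 * Real.pi * a * ξ) * Complex.I) *
        ∫ x : ℝ, Complex.exp (↑(-2 * Real.pi * x * ξ) * Complex.I) * g x := by
    rw [← integral_const_mul, ← integral_add_right_eq_self (μ := volume) (fun x : ℝ =>
      Complex.exp (↑(2 * Real.pi * a * ξ) * Complex.I) *
        (Complex.exp (↑(-2 * Real.pi * x * ξ) * Complex.I) * g x)) a]
    refine integral_congr_ae (Eventually.of_forall fun x => ?_)
    simp only [← mul_assoc, ← Complex.exp_add]
    congr 2
    push_cast
    ring
  have hsplit (x : ℝ) : Complex.exp (↑(-2 * Real.pi * x * ξ) * Complex.I) *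
        secondDifference h g x =
      Complex.exp (↑(-2 * Real.pi * x * ξ) * Complex.I) * g (x + 0) -
        (Complex.exp (↑(-2 * Real.pi * x * ξ) * Complex.I) * g (x + h) +
          Complex.exp (↑(-2 * Real.pi * x * ξ) * Complex.I) * g (x + -h)) / 2 := by
    simp only [secondDifference, add_zero]
    push_cast
    ring
  simp only [Real.fourier_real_eq_integral_exp_smul, smul_eq_mul]
  simp only [hsplit]
  rw [integral_sub (hint 0) (((hint h).fun_add (hint (-h))).div_const 2), integral_div,
    integral_add (hint h) (hint (-h)), hshift, hshift, hshift]
  push_cast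
  rw [Complex.cos]
  simp only [mul_zero, zero_mul, Complex.exp_zero, mul_neg, neg_mul]
  ring

lemma IsPlateau.isPlateau_secondDifference {g : ℝ → ℝ} {r R : ℝ} (hg : IsPlateau g r R) :
    IsPlateau (secondDifference (2 * R) g) r (3 * R) := by
  have hlt := hg.inner_lt_outer
  have hr := hg.inner_pos
  have hinner (x : ℝ) (hx : |x| < R) : secondDifference (2 * R) g x = g x := by
    obtain ⟨h₁, h₂⟩ := abs_lt.1 hx
    rw [secondDifference, hg.eq_zero (x + 2 * R) (le_abs.2 (.inl (by linarith))),
      hg.eq_zero (x + -(2 * R)) (le_abs.2 (.inr (by linarith)))]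
    simp
  refine ⟨?_, fun x => ?_, fun x => ?_, hr, fun x hx => ?_, fun x hx => ?_⟩
  · have := hg.contDiff
    unfold secondDifference
    fun_prop
  · simp only [secondDifference]
    rw [hg.even, show -x + 2 * R = -(x + -(2 * R)) by ring,
      show -x + -(2 * R) = -(x + 2 * R) by ring, hg.even, hg.even, add_comm (g (x + -(2 * R)))]
  · rcases lt_or_ge |x| R with hx | hx
    · exact hinner x hx ▸ hg.abs_le_one x
    · rw [secondDifference, hg.eq_zero x hx]
      have h₁ := abs_le.1 (hg.abs_le_one (x + 2 * R))
      have h₂ := abs_le.1 (hg.abs_le_one (x + -(2 * R)))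
      exact abs_le.2 ⟨by linarith [h₁.2, h₂.2], by linarith [h₁.1, h₂.1]⟩
  · rw [hinner x (hx.trans_lt hlt), hg.eq_one x hx]
  · have h₁ : R ≤ |x + 2 * R| := by
      rcases le_abs.1 hx with h | h
      · exact le_abs.2 (.inl (by linarith))
      · exact le_abs.2 (.inr (by linarith))
    have h₂ : R ≤ |x + -(2 * R)| := by
      rcases le_abs.1 hx with h | h
      · exact le_abs.2 (.inl (by linarith))
      · exact le_abs.2 (.inr (by linarith))
    rw [secondDifference, hg.eq_zero x (by linarith), hg.eq_zero _ h₁, hg.eq_zero _ h₂]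
    simp

lemma exists_isPlateau_fourier_le_abs_pow (k : ℕ) :
    ∃ (g : ℝ → ℝ) (r R : ℝ), IsPlateau g r R ∧
      ∃ B : ℝ, 0 < B ∧ ∀ ξ, ‖𝓕 (fun x => (g x : ℂ)) ξ‖ ≤ B * |ξ| ^ (2 * k) := by
  induction k with
  | zero =>
    obtain ⟨g, hg, -⟩ := exists_isPlateau_nonneg
    obtain ⟨B, hB, hdecay⟩ := hg.exists_abs_pow_mul_fourier_le 0
    exact ⟨g, 1, 2, hg, B, hB, fun ξ => by simpa using hdecay ξ⟩
  | succ k ih =>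
    obtain ⟨g, r, R, hg, B, hB, hbound⟩ := ih
    have hR : 0 < R := hg.inner_pos.trans hg.inner_lt_outer
    refine ⟨_, r, 3 * R, hg.isPlateau_secondDifference,
      (2 * Real.pi * (2 * R)) ^ 2 / 2 * B, by positivity, fun ξ => ?_⟩
    have hcos : |1 - Real.cos (2 * Real.pi * (2 * R) * ξ)| ≤
        (2 * Real.pi * (2 * R) * ξ) ^ 2 / 2 := by
      rw [abs_of_nonneg (by linarith [Real.cos_le_one (2 * Real.pi * (2 * R) * ξ)])]
      linarith [Real.one_sub_sq_div_two_le_cos (x := 2 * Real.pi * (2 * R) * ξ)]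
    rw [fourier_secondDifference hg.integrable, norm_mul, Complex.norm_real, Real.norm_eq_abs]
    calc _ ≤ (2 * Real.pi * (2 * R) * ξ) ^ 2 / 2 * (B * |ξ| ^ (2 * k)) := by
          gcongr
          exact hbound ξ
      _ = _ := by rw [mul_add, pow_add, mul_one, sq_abs]; ring

lemma exists_isPlateau_fourier_le_min (K : ℕ) :
    ∃ (g : ℝ → ℝ) (r R : ℝ), IsPlateau g r R ∧
      ∃ B : ℝ, 0 < B ∧ ∀ ξ, ‖𝓕 (fun x => (g x : ℂ)) ξ‖ ≤ B * min |ξ| |ξ|⁻¹ ^ K := by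
  obtain ⟨g, r, R, hg, B₀, hB₀, hzero⟩ := exists_isPlateau_fourier_le_abs_pow K
  obtain ⟨B, hB, hdecay⟩ := hg.exists_abs_pow_mul_fourier_le K
  refine ⟨g, r, R, hg, B₀ + B, by positivity, fun ξ => ?_⟩
  rcases le_or_gt |ξ| 1 with hξ | hξ
  · have hinv : |ξ| ≤ |ξ|⁻¹ := by
      rcases (abs_nonneg ξ).eq_or_lt with h₀ | h₀
      · simp [← h₀]
      · exact hξ.trans ((one_le_inv₀ h₀).2 hξ)
    have hmin : |ξ| ^ (2 * K) ≤ min |ξ| |ξ|⁻¹ ^ K := by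
      rw [min_eq_left hinv]
      exact pow_le_pow_of_le_one (abs_nonneg ξ) hξ (by omega)
    calc _ ≤ B₀ * min |ξ| |ξ|⁻¹ ^ K := (hzero ξ).trans (by gcongr)
      _ ≤ _ := by gcongr; linarith
  · have h₀ : 0 < |ξ| := by linarith
    rw [min_eq_right ((inv_le_one_of_one_le₀ hξ.le).trans hξ.le), inv_pow, ← div_eq_mul_inv,
      le_div_iff₀ (pow_pos h₀ K), mul_comm]
    exact (hdecay ξ).trans (by linarith)

end Plateau

section CircleBump

open scoped FourierTransform

/-- The function `g` transplanted to the circle at scale `1 / N` around `0`. For an even `g` it is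
smooth at `0`, although it is written through the norm. -/
def circleBump (g : ℝ → ℝ) (N : ℝ) (x : UnitAddCircle) : ℝ := g (N * ‖x‖)

lemma continuous_circleBump {g : ℝ → ℝ} (hg : Continuous g) (N : ℝ) :
    Continuous (circleBump g N) := by
  unfold circleBump
  fun_prop

variable {g : ℝ → ℝ} {r R N : ℝ}

lemma IsPlateau.circleBump_coe (hg : IsPlateau g r R) {x : ℝ} (hx : |x| ≤ 1 / 2) :
    circleBump g N x = g (N * x) := by
  have hnorm : ‖(x : UnitAddCircle)‖ = |x| :=
    (AddCircle.norm_coe_eq_abs_iff _ one_ne_zero).2 (by simpa using hx)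
  rw [circleBump, hnorm]
  rcases abs_choice x with h | h <;> rw [h]
  rw [mul_neg, hg.even]

lemma IsPlateau.fc_circleBump (hg : IsPlateau g r R) (hN : 2 * R ≤ N) (n : ℤ) :
    fc (circleBump g N) n = (N : ℂ)⁻¹ * 𝓕 (fun x => (g x : ℂ)) (n / N) := by
  have hN₀ : 0 < N := by linarith [hg.inner_pos, hg.inner_lt_outer]
  set F : ℝ → ℂ := fun y => Complex.exp (↑(-2 * Real.pi * y * (n / N)) * Complex.I) * g y with hF
  have hcongr : ∫ x : ℝ in (-(1 / 2) : ℝ)..(-(1 / 2) + 1),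
      fourier (-n) (x : UnitAddCircle) • (circleBump g N x : ℂ) =
      ∫ x : ℝ in (-(1 / 2) : ℝ)..(-(1 / 2) + 1), F (N * x) := by
    refine intervalIntegral.integral_congr fun x hx => ?_
    rw [Set.uIcc_of_le (by norm_num)] at hx
    simp only [hF, smul_eq_mul, fourier_coe_apply]
    rw [hg.circleBump_coe (abs_le.2 ⟨hx.1, by linarith [hx.2]⟩)]
    congr 2
    have : (N : ℂ) ≠ 0 := by exact_mod_cast hN₀.ne'
    push_cast
    field_simp
  have hsupp : Function.support (fun x => F (N * x)) ⊆ Set.Ioc (-(1 / 2)) (-(1 / 2) + 1) := by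
    intro x hx
    have hlt : |N * x| < R := by
      by_contra! hle
      exact hx (by simp only [hF, hg.eq_zero _ hle, Complex.ofReal_zero, mul_zero])
    rw [abs_mul, abs_of_pos hN₀] at hlt
    obtain ⟨h₁, h₂⟩ := abs_lt.1 (show |x| < 1 / 2 by nlinarith)
    exact ⟨h₁, by linarith⟩
  rw [fc, fourierCoeff_eq_intervalIntegral _ _ (-(1 / 2)), hcongr,
    intervalIntegral.integral_eq_integral_of_support_subset hsupp,
    Measure.integral_comp_mul_left, Real.fourier_real_eq_integral_exp_smul,
    abs_of_pos (by positivity)]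
  simp only [hF, smul_eq_mul, one_div, inv_one, one_smul, Complex.real_smul, Complex.ofReal_inv]

lemma sum_range_div_sq_add_sq_le (hN : 1 ≤ N) (J : ℕ) :
    ∑ n ∈ Finset.range J, N / (N ^ 2 + (n : ℝ) ^ 2) ≤ 4 := by
  have hterm (n : ℕ) :
      N / (N ^ 2 + (n : ℝ) ^ 2) ≤ 4 * N * (1 / (N + n) - 1 / (N + (n + 1 : ℕ))) := by
    have htele : 4 * N * (1 / (N + n) - 1 / (N + (n + 1 : ℕ))) =
        4 * N / ((N + n) * (N + n + 1)) := by
      push_cast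
      field_simp
      ring
    have hquad : (N + n) * (N + n + 1) ≤ 4 * (N ^ 2 + (n : ℝ) ^ 2) := by
      nlinarith [sq_nonneg (N - n), (n.cast_nonneg : (0 : ℝ) ≤ n)]
    rw [htele, div_le_div_iff₀ (by positivity) (by positivity)]
    nlinarith
  have hlast : 0 ≤ 4 * N * (1 / (N + (J : ℝ))) := by positivity
  calc _ ≤ 4 * N * (1 / (N + (0 : ℕ)) - 1 / (N + J)) := by
        rw [← Finset.sum_range_sub' (fun n : ℕ => 1 / (N + n)), Finset.mul_sum]
        exact Finset.sum_le_sum fun n _ => hterm n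
    _ = 4 - 4 * N * (1 / (N + J)) := by
        have : N ≠ 0 := by positivity
        simp only [Nat.cast_zero, add_zero]
        field_simp
    _ ≤ 4 := by linarith

lemma tsum_ofReal_div_sq_add_sq_le (hN : 1 ≤ N) :
    ∑' m : ℤ, ENNReal.ofReal (N / (N ^ 2 + (m : ℝ) ^ 2)) ≤ 8 := by
  have hnat : ∑' n : ℕ, ENNReal.ofReal (N / (N ^ 2 + (n : ℝ) ^ 2)) ≤ 4 := by
    refine ENNReal.summable.tsum_le_of_sum_range_le fun J => ?_
    rw [← ENNReal.ofReal_sum_of_nonneg fun n _ => by positivity]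
    exact ENNReal.ofReal_le_of_le_toReal (by simpa using sum_range_div_sq_add_sq_le hN J)
  rw [tsum_of_nat_of_neg_add_one ENNReal.summable ENNReal.summable]
  calc _ ≤ (4 : ENNReal) + 4 := by
        refine add_le_add (by simpa using hnat) (le_trans ?_ hnat)
        refine ENNReal.tsum_le_tsum fun n => ENNReal.ofReal_le_ofReal ?_
        push_cast
        rw [neg_sq]
        gcongr
        linarith
    _ = 8 := by norm_num

lemma IsPlateau.exists_tsum_enorm_fc_circleBump_le (hg : IsPlateau g r R) :
    ∃ B : ℝ, ∀ N, 1 ≤ N → 2 * R ≤ N → ∑' n, ‖fc (circleBump g N) n‖ₑ ≤ ENNReal.ofReal B := by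
  obtain ⟨B₀, -, h₀⟩ := hg.exists_abs_pow_mul_fourier_le 0
  obtain ⟨B₂, -, h₂⟩ := hg.exists_abs_pow_mul_fourier_le 2
  refine ⟨(B₀ + B₂) * 8, fun N hN hNR => ?_⟩
  have hB : 0 ≤ B₀ + B₂ :=
    add_nonneg ((by positivity : (0 : ℝ) ≤ _).trans (h₀ 0))
      ((by positivity : (0 : ℝ) ≤ _).trans (h₂ 0))
  have hterm (n : ℤ) :
      ‖fc (circleBump g N) n‖ ≤ (B₀ + B₂) * (N / (N ^ 2 + (n : ℝ) ^ 2)) := by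
    have h₀' := h₀ (n / N)
    have h₂' := h₂ (n / N)
    rw [pow_zero, one_mul] at h₀'
    rw [sq_abs, div_pow, div_mul_eq_mul_div, div_le_iff₀ (by positivity)] at h₂'
    rw [hg.fc_circleBump hNR, norm_mul, norm_inv, Complex.norm_real, Real.norm_eq_abs,
      abs_of_pos (by linarith), inv_mul_eq_div, mul_div_assoc',
      div_le_div_iff₀ (by linarith) (by positivity)]
    nlinarith [mul_le_mul_of_nonneg_right h₀' (sq_nonneg N)]
  calc ∑' n, ‖fc (circleBump g N) n‖ₑ
      ≤ ∑' n : ℤ, ENNReal.ofReal (B₀ + B₂) * ENNReal.ofReal (N / (N ^ 2 + (n : ℝ) ^ 2)) := by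
        refine ENNReal.tsum_le_tsum fun n => ?_
        rw [← ENNReal.ofReal_mul hB, ← ofReal_norm]
        exact ENNReal.ofReal_le_ofReal (hterm n)
    _ ≤ ENNReal.ofReal (B₀ + B₂) * 8 := by
        rw [ENNReal.tsum_mul_left]
        gcongr
        exact tsum_ofReal_div_sq_add_sq_le hN
    _ = ENNReal.ofReal ((B₀ + B₂) * 8) := by
        rw [ENNReal.ofReal_mul hB, ENNReal.ofReal_ofNat]

end CircleBump

section FourierCoefficients

open AddCircle Convolution

lemma norm_fourier_apply {T : ℝ} (n : ℤ) (x : AddCircle T) : ‖fourier n x‖ = 1 := by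
  rw [fourier_apply, Circle.norm_coe]

lemma fourier_sub_apply {T : ℝ} (n : ℤ) (x y : AddCircle T) :
    fourier n (x - y) = fourier n x * fourier (-n) y := by
  simp only [fourier_apply, sub_eq_add_neg, zsmul_add, smul_neg, neg_smul, toCircle_add,
    Circle.coe_mul]

variable {T : ℝ} [hT : Fact (0 < T)]

lemma integrable_fourier_mul {f : AddCircle T → ℂ} (hf : Integrable f haarAddCircle) (n : ℤ) :
    Integrable (fun x => fourier n x * f x) haarAddCircle :=
  hf.bdd_mul (map_continuous (fourier n)).aestronglyMeasurable
    (Eventually.of_forall fun x => (norm_fourier_apply n x).le)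

lemma norm_fourierCoeff_le_integral_norm {E : Type*} [NormedAddCommGroup E] [NormedSpace ℂ E]
    (f : AddCircle T → E) (n : ℤ) : ‖fourierCoeff f n‖ ≤ ∫ x, ‖f x‖ ∂haarAddCircle := by
  refine (norm_integral_le_integral_norm _).trans_eq ?_
  simp only [norm_smul, norm_fourier_apply, one_mul]

lemma norm_fourierCoeff_comp_sub_right (f : AddCircle T → ℂ) (a : AddCircle T) (n : ℤ) :
    ‖fourierCoeff (fun x => f (x - a)) n‖ = ‖fourierCoeff f n‖ := by
  have hshift : fourierCoeff (fun x => f (x - a)) n = fourier (-n) a * fourierCoeff f n := by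
    rw [fourierCoeff, fourierCoeff, ← integral_const_mul,
      ← integral_sub_right_eq_self (fun x => fourier (-n) a * (fourier (-n) x • f x)) a]
    refine integral_congr_ae (Eventually.of_forall fun x => ?_)
    have hsplit : fourier (-n) x = fourier (-n) (x - a) * fourier (-n) a := by
      rw [fourier_sub_apply, mul_assoc, ← fourier_add, neg_add_cancel, fourier_zero, mul_one]
    simp only [smul_eq_mul, hsplit]
    ring
  rw [hshift, norm_mul, norm_fourier_apply, one_mul]

lemma fourierCoeff_mul_of_summable {f : C(AddCircle T, ℂ)} (hf : Summable (fourierCoeff f))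
    {g : AddCircle T → ℂ} (hg : Integrable g haarAddCircle) (n : ℤ) :
    fourierCoeff (fun x => f x * g x) n = ∑' k, fourierCoeff f k * fourierCoeff g (n - k) := by
  have hint (k : ℤ) :
      Integrable (fun x => fourierCoeff f k * (fourier (-(n - k)) x * g x)) haarAddCircle :=
    (integrable_fourier_mul hg _).const_mul _
  have hnorm :
      Summable fun k => ∫ x, ‖fourierCoeff f k * (fourier (-(n - k)) x * g x)‖ ∂haarAddCircle := by
    simp only [norm_mul, norm_fourier_apply, one_mul, integral_const_mul]
    exact hf.norm.mul_right _
  have hsum := hasSum_integral_of_summable_integral_norm hint hnorm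
  simp only [integral_const_mul] at hsum
  refine Eq.trans (integral_congr_ae (Eventually.of_forall fun x => ?_)) hsum.tsum_eq.symm
  have hseries := ((has_pointwise_sum_fourier_series_of_summable hf x).mul_right
    (g x)).mul_left (fourier (-n) x)
  simp only [smul_eq_mul] at hseries ⊢
  rw [← hseries.tsum_eq]
  refine tsum_congr fun k => ?_
  rw [show -(n - k) = -n + k by ring, fourier_add]
  ring

lemma fourierCoeff_convolution {f g : AddCircle T → ℂ} (hf : Integrable f haarAddCircle)
    (hg : Integrable g haarAddCircle) (n : ℤ) :
    fourierCoeff (f ⋆[ContinuousLinearMap.mul ℂ ℂ, haarAddCircle] g) n =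
      fourierCoeff f n * fourierCoeff g n := by
  refine Eq.trans ?_ (integral_convolution (ContinuousLinearMap.mul ℂ ℂ)
    (integrable_fourier_mul hf (-n)) (integrable_fourier_mul hg (-n)))
  refine integral_congr_ae (Eventually.of_forall fun x => ?_)
  simp only [convolution, smul_eq_mul, ContinuousLinearMap.mul_apply', ← integral_const_mul]
  refine integral_congr_ae (Eventually.of_forall fun y => ?_)
  simp only [fourier_sub_apply]
  have hcancel : fourier (-n) y * fourier (-(-n)) y = (1 : ℂ) := by
    rw [← fourier_add, add_neg_cancel, fourier_zero]
  linear_combination (-(fourier (-n) x * f y * g (x - y))) * hcancel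

end FourierCoefficients

section WeightedNorm

open scoped ENNReal

/-- The measure `∑ λ_|n| δ_n` on `ℤ`, whose `L²` space is the weighted space `ℓ²(λ)`. -/
def weightMeasure (lam : ℕ → ℝ) : Measure ℤ :=
  Measure.count.withDensity fun n => ENNReal.ofReal (lam n.natAbs)

lemma sq_eLpNorm_two {α E : Type*} [MeasurableSpace α] [NormedAddCommGroup E] (f : α → E)
    (μ : Measure α) : eLpNorm f 2 μ ^ 2 = ∫⁻ x, ‖f x‖ₑ ^ 2 ∂μ := by
  have hpow := eLpNorm_nnreal_pow_eq_lintegral (f := f) (μ := μ) two_ne_zero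
  simpa only [ENNReal.coe_ofNat, NNReal.coe_ofNat, ENNReal.rpow_ofNat] using hpow

lemma eLpNorm_weightMeasure_sq (lam : ℕ → ℝ) (u : ℤ → ℂ) :
    eLpNorm u 2 (weightMeasure lam) ^ 2 =
      ∑' n : ℤ, ‖u n‖ₑ ^ 2 * ENNReal.ofReal (lam n.natAbs) := by
  rw [sq_eLpNorm_two, weightMeasure, lintegral_withDensity_eq_lintegral_mul _
    (measurable_of_countable _) (measurable_of_countable _), lintegral_count]
  simp only [Pi.mul_apply, mul_comm]

lemma eLpNorm_weightMeasure_sq_eq_tsum_ofReal (lam : ℕ → ℝ) (u : ℤ → ℂ) :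
    eLpNorm u 2 (weightMeasure lam) ^ 2 =
      ∑' n : ℤ, ENNReal.ofReal (‖u n‖ ^ 2 * lam n.natAbs) := by
  simp only [eLpNorm_weightMeasure_sq, ENNReal.ofReal_mul (sq_nonneg _),
    ENNReal.ofReal_pow (norm_nonneg _), ofReal_norm]

lemma memLp_weightMeasure_iff_tsum_lt_top (lam : ℕ → ℝ) (u : ℤ → ℂ) :
    MemLp u 2 (weightMeasure lam) ↔
      ∑' n : ℤ, ENNReal.ofReal (‖u n‖ ^ 2 * lam n.natAbs) < ∞ := by
  rw [MemLp, and_iff_right (measurable_of_countable u).aestronglyMeasurable,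
    ← eLpNorm_weightMeasure_sq_eq_tsum_ofReal, ENNReal.pow_lt_top_iff, or_iff_left two_ne_zero]

lemma memLp_weightMeasure_of_summable {lam : ℕ → ℝ} {u : ℤ → ℂ}
    (hu : Summable fun n : ℤ => ‖u n‖ ^ 2 * lam n.natAbs) : MemLp u 2 (weightMeasure lam) :=
  (memLp_weightMeasure_iff_tsum_lt_top lam u).2 hu.tsum_ofReal_lt_top

lemma memLp_weightMeasure_iff {lam : ℕ → ℝ} (hlam : ∀ n, 0 ≤ lam n) (u : ℤ → ℂ) :
    MemLp u 2 (weightMeasure lam) ↔ Summable fun n : ℤ => ‖u n‖ ^ 2 * lam n.natAbs := by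
  refine ⟨fun hu => ?_, memLp_weightMeasure_of_summable⟩
  have hfin := ((memLp_weightMeasure_iff_tsum_lt_top lam u).1 hu).ne
  exact (ENNReal.summable_toReal hfin).congr fun n =>
    ENNReal.toReal_ofReal (mul_nonneg (sq_nonneg _) (hlam _))

lemma memLp_weightMeasure_of_eLpNorm_sub_lt {lam : ℕ → ℝ} {u v : ℤ → ℂ} {η : ℝ≥0∞}
    (hv : MemLp v 2 (weightMeasure lam)) (huv : eLpNorm (u - v) 2 (weightMeasure lam) < η) :
    MemLp u 2 (weightMeasure lam) := by
  have hdiff : MemLp (u - v) 2 (weightMeasure lam) :=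
    ⟨(measurable_of_countable _).aestronglyMeasurable, huv.trans_le le_top⟩
  simpa only [sub_add_cancel] using hdiff.add hv

lemma toReal_eLpNorm_weightMeasure {lam : ℕ → ℝ} (hlam : ∀ n, 0 ≤ lam n) (u : ℤ → ℂ) :
    (eLpNorm u 2 (weightMeasure lam)).toReal =
      √(∑' n : ℤ, ‖u n‖ ^ 2 * lam n.natAbs) := by
  have hnonneg (n : ℤ) : 0 ≤ ‖u n‖ ^ 2 * lam n.natAbs := mul_nonneg (sq_nonneg _) (hlam _)
  rw [eq_comm, Real.sqrt_eq_iff_eq_sq (tsum_nonneg hnonneg) ENNReal.toReal_nonneg,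
    ← ENNReal.toReal_pow, eLpNorm_weightMeasure_sq_eq_tsum_ofReal, ENNReal.tsum_toReal_eq
    fun n => ENNReal.ofReal_ne_top]
  simp only [ENNReal.toReal_ofReal (hnonneg _)]

lemma sq_tsum_mul_le {ι : Type*} (w f : ι → ℝ≥0∞) :
    (∑' i, w i * f i) ^ 2 ≤ (∑' i, w i) * ∑' i, w i * f i ^ 2 := by
  have hfin (s : Finset ι) :
      ∑ i ∈ s, w i * f i ≤ ((∑' i, w i) * ∑' i, w i * f i ^ 2) ^ (2⁻¹ : ℝ) := by
    have hcs := ENNReal.inner_le_weight_mul_Lp_of_nonneg s one_le_two w f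
    rw [show (1 - 2⁻¹ : ℝ) = 2⁻¹ by norm_num, ← ENNReal.mul_rpow_of_nonneg _ _ (by norm_num)] at hcs
    refine hcs.trans ?_
    simp only [ENNReal.rpow_ofNat]
    gcongr <;> exact ENNReal.sum_le_tsum s
  rw [← ENNReal.rpow_ofNat, ← ENNReal.le_rpow_inv_iff two_pos]
  exact ENNReal.tsum_eq_iSup_sum.trans_le (iSup_le hfin)

lemma IsModerate.eLpNorm_conv_sq_le {lam : ℕ → ℝ} {C : ℝ} {M : ℕ} (h : IsModerate lam C M)
    (hlam : ∀ n, 0 ≤ lam n) (hC : 0 ≤ C) (a b : ℤ → ℂ) :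
    eLpNorm (fun n => ∑' k, a k * b (n - k)) 2 (weightMeasure lam) ^ 2 ≤
      (∑' k, ‖a k‖ₑ) * (∑' k : ℤ, ‖a k‖ₑ * ENNReal.ofReal (C * (1 + |(k : ℝ)|) ^ M)) *
        eLpNorm b 2 (weightMeasure lam) ^ 2 := by
  set W : ℤ → ℝ≥0∞ := fun k => ENNReal.ofReal (C * (1 + |(k : ℝ)|) ^ M)
  set L : ℤ → ℝ≥0∞ := fun n => ENNReal.ofReal (lam n.natAbs)
  have hshift (n k : ℤ) : L n ≤ W k * L (n - k) := by
    rw [← ENNReal.ofReal_mul (by positivity)]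
    exact ENNReal.ofReal_le_ofReal (h.le_mul_shift hlam hC n k)
  have hterm (n : ℤ) : ‖∑' k, a k * b (n - k)‖ₑ ^ 2 * L n ≤
      (∑' k, ‖a k‖ₑ) * ∑' k, ‖a k‖ₑ * W k * (‖b (n - k)‖ₑ ^ 2 * L (n - k)) := by
    calc ‖∑' k, a k * b (n - k)‖ₑ ^ 2 * L n
        ≤ (∑' k, ‖a k‖ₑ * ‖b (n - k)‖ₑ) ^ 2 * L n := by
          gcongr
          exact enorm_tsum_le_tsum_enorm.trans_eq (by simp only [enorm_mul])
      _ ≤ (∑' k, ‖a k‖ₑ) * (∑' k, ‖a k‖ₑ * ‖b (n - k)‖ₑ ^ 2) * L n := by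
          gcongr
          exact sq_tsum_mul_le _ _
      _ = (∑' k, ‖a k‖ₑ) * ∑' k, ‖a k‖ₑ * ‖b (n - k)‖ₑ ^ 2 * L n := by
          rw [mul_assoc, ENNReal.tsum_mul_right]
      _ ≤ _ := by
          refine mul_le_mul_right (ENNReal.tsum_le_tsum fun k => ?_) _
          calc ‖a k‖ₑ * ‖b (n - k)‖ₑ ^ 2 * L n
              ≤ ‖a k‖ₑ * ‖b (n - k)‖ₑ ^ 2 * (W k * L (n - k)) := by gcongr; exact hshift n k
            _ = ‖a k‖ₑ * W k * (‖b (n - k)‖ₑ ^ 2 * L (n - k)) := by ring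
  have htranslate (k : ℤ) :
      ∑' n, ‖b (n - k)‖ₑ ^ 2 * L (n - k) = ∑' n, ‖b n‖ₑ ^ 2 * L n :=
    (Equiv.subRight k).tsum_eq fun n => ‖b n‖ₑ ^ 2 * L n
  rw [eLpNorm_weightMeasure_sq, eLpNorm_weightMeasure_sq]
  refine (ENNReal.tsum_le_tsum hterm).trans_eq ?_
  rw [ENNReal.tsum_mul_left, ENNReal.tsum_comm]
  simp only [ENNReal.tsum_mul_left, htranslate]
  rw [ENNReal.tsum_mul_right, mul_assoc]

end WeightedNorm

section LacunarySums

lemma min_div_le_eight_mul_sub {x a : ℝ} (hx : 0 < x) (ha : 0 < a) {A : ℝ} (hA : 2 ≤ A) :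
    min (x / (a * A)) (a * A / x) ≤ 8 * (a * A / (x + a * A) - a / (x + a)) := by
  have hb : 2 * a ≤ a * A := by nlinarith
  set b := a * A
  have hb₀ : 0 < b := by linarith
  have hba : 0 ≤ b - a := by linarith
  have hdiff : x * b / (x + b) ^ 2 ≤ 2 * (b / (x + b) - a / (x + a)) := by
    rw [show b / (x + b) - a / (x + a) = x * (b - a) / ((x + b) * (x + a)) by field_simp; ring,
      ← mul_div_assoc, div_le_div_iff₀ (by positivity) (by positivity)]
    calc x * b * ((x + b) * (x + a)) ≤ x * (2 * (b - a)) * ((x + b) * (x + b)) := by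
          gcongr <;> linarith
      _ = 2 * (x * (b - a)) * (x + b) ^ 2 := by ring
  have hmin : min (x / b) (b / x) ≤ 4 * (x * b / (x + b) ^ 2) := by
    rw [← mul_div_assoc, le_div_iff₀ (by positivity)]
    rcases le_total x b with hxb | hbx
    · calc min (x / b) (b / x) * (x + b) ^ 2 ≤ x / b * (b + b) ^ 2 := by
            gcongr; exact min_le_left _ _
        _ = 4 * (x * b) := by field_simp; ring
    · calc min (x / b) (b / x) * (x + b) ^ 2 ≤ b / x * (x + x) ^ 2 := by
            gcongr; exact min_le_right _ _
        _ = 4 * (x * b) := by field_simp; ring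
  linarith

lemma sum_min_div_pow_le_eight {x : ℝ} (hx : 0 ≤ x) {A : ℝ} (hA : 2 ≤ A) (J : ℕ) :
    ∑ j ∈ Finset.range J, min (x / A ^ (j + 1)) (A ^ (j + 1) / x) ≤ 8 := by
  rcases hx.eq_or_lt with rfl | hx
  · simp only [zero_div, div_zero, min_self, Finset.sum_const_zero, Nat.ofNat_nonneg]
  have hA₀ : 0 < A := by linarith
  calc ∑ j ∈ Finset.range J, min (x / A ^ (j + 1)) (A ^ (j + 1) / x)
      ≤ ∑ j ∈ Finset.range J, 8 * (A ^ (j + 1) / (x + A ^ (j + 1)) - A ^ j / (x + A ^ j)) :=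
        Finset.sum_le_sum fun j _ => by
          simpa only [pow_succ] using min_div_le_eight_mul_sub hx (pow_pos hA₀ j) hA
    _ = 8 * (A ^ J / (x + A ^ J) - A ^ 0 / (x + A ^ 0)) := by
        rw [← Finset.mul_sum, Finset.sum_range_sub fun j => A ^ j / (x + A ^ j)]
    _ ≤ 8 * (1 - 0) := by
        gcongr
        · exact div_le_one_of_le₀ (by linarith) (by positivity)
        · positivity
    _ = 8 := by norm_num

end LacunarySums

section Cutoff

open scoped FourierTransform ENNReal

variable {g : ℝ → ℝ} {r R : ℝ} {lam : ℕ → ℝ} {C : ℝ} {M : ℕ}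

lemma IsPlateau.div_mul_norm_fc_circleBump_mul_le (hg : IsPlateau g r R) {B : ℝ} (hB : 0 ≤ B)
    (hdecay : ∀ ξ, ‖𝓕 (fun x => (g x : ℂ)) ξ‖ ≤ B * min |ξ| |ξ|⁻¹ ^ (M + 1))
    (h : IsModerate lam C M) (hlam : ∀ n, 0 < lam n) (hC : 0 ≤ C) {N : ℕ} (hN : 1 ≤ N)
    (hNR : 2 * R ≤ N) (m : ℤ) :
    N / lam N * (‖fc (circleBump g N) m‖ * lam m.natAbs) ≤
      B * C * 2 ^ M * min (|(m : ℝ)| / N) (N / |(m : ℝ)|) := by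
  have hN₀ : (1 : ℝ) ≤ N := by exact_mod_cast hN
  have hfc : ‖fc (circleBump g N) m‖ ≤
      (N : ℝ)⁻¹ * (B * min (|(m : ℝ)| / N) (N / |(m : ℝ)|) ^ (M + 1)) := by
    rw [hg.fc_circleBump hNR, norm_mul, norm_inv, Complex.norm_real, Real.norm_natCast]
    gcongr
    simpa only [abs_div, Nat.abs_cast, inv_div] using hdecay (m / N)
  rcases eq_or_ne m 0 with rfl | hm
  · simp only [Int.cast_zero, abs_zero, zero_div, div_zero, min_self, mul_zero,
      zero_pow M.succ_ne_zero] at hfc ⊢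
    rw [norm_le_zero_iff.1 hfc, norm_zero, zero_mul, mul_zero]
  have hm₀ : (1 : ℝ) ≤ |(m : ℝ)| := by exact_mod_cast Int.one_le_abs hm
  set t := min (|(m : ℝ)| / N) (N / |(m : ℝ)|)
  have ht : 0 < t := by positivity
  have hratio : max (((m.natAbs : ℝ) + 1) / (N + 1)) ((N + 1) / ((m.natAbs : ℝ) + 1)) ≤
      2 * t⁻¹ := by
    rw [Nat.cast_natAbs, Int.cast_abs]
    refine max_le ?_ ?_
    · calc (|(m : ℝ)| + 1) / (N + 1) ≤ (|(m : ℝ)| + |(m : ℝ)|) / N := by gcongr; linarith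
        _ = 2 * (N / |(m : ℝ)|)⁻¹ := by rw [inv_div]; ring
        _ ≤ 2 * t⁻¹ := by gcongr; exact min_le_right _ _
    · calc (N + 1 : ℝ) / (|(m : ℝ)| + 1) ≤ (N + N) / |(m : ℝ)| := by gcongr; linarith
        _ = 2 * (|(m : ℝ)| / N)⁻¹ := by rw [inv_div]; ring
        _ ≤ 2 * t⁻¹ := by gcongr; exact min_le_left _ _
  have hweight : lam m.natAbs ≤ C * (2 * t⁻¹) ^ M * lam N :=
    (h N m.natAbs).trans (by have := hlam N; gcongr)
  have hlamN := hlam N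
  have hlamm := hlam m.natAbs
  calc N / lam N * (‖fc (circleBump g N) m‖ * lam m.natAbs)
      ≤ N / lam N * ((N : ℝ)⁻¹ * (B * t ^ (M + 1)) * (C * (2 * t⁻¹) ^ M * lam N)) := by
        gcongr
    _ = B * C * 2 ^ M * t := by
        rw [mul_pow, inv_pow, pow_succ]
        field_simp

/-- The average of the bumps `g (A ^ (j + 1) * ‖x‖)`, `j < J`, with weights proportional to
`w j`. -/
def bumpAverage (g : ℝ → ℝ) (A : ℕ) (w : ℕ → ℝ) (J : ℕ) (x : UnitAddCircle) : ℝ :=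
  (∑ j ∈ Finset.range J, w j * circleBump g ((A ^ (j + 1) : ℕ) : ℝ) x) / ∑ j ∈ Finset.range J, w j

variable {A : ℕ} {w : ℕ → ℝ} {J : ℕ}

lemma continuous_bumpAverage (hg : Continuous g) : Continuous (bumpAverage g A w J) :=
  (continuous_finsetSum _ fun _ _ =>
    continuous_const.mul (continuous_circleBump hg _)).div_const _

lemma IsPlateau.bumpAverage_le_one (hg : IsPlateau g r R) (hw : ∀ j, 0 ≤ w j)
    (x : UnitAddCircle) : bumpAverage g A w J x ≤ 1 :=
  div_le_one_of_le₀
    (Finset.sum_le_sum fun j _ => mul_le_of_le_one_right (hw j) (abs_le.1 (hg.abs_le_one _)).2)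
    (Finset.sum_nonneg fun j _ => hw j)

lemma IsPlateau.inner_lt_of_circleBump_neg (hg : IsPlateau g r R) {N : ℝ} (hN : 0 ≤ N)
    {x : UnitAddCircle} (hx : circleBump g N x < 0) : r < N * ‖x‖ ∧ N * ‖x‖ < R := by
  have habs : |N * ‖x‖| = N * ‖x‖ := abs_of_nonneg (by positivity)
  constructor <;> by_contra! hle <;> refine hx.not_ge ?_
  · exact zero_le_one.trans_eq (hg.eq_one _ (habs.trans_le hle)).symm
  · exact (hg.eq_zero _ (hle.trans_eq habs.symm)).ge

lemma IsPlateau.circleBump_pow_nonneg_of_ne (hg : IsPlateau g r R) (hA : 1 ≤ A)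
    (hAr : R ≤ A * r) {x : UnitAddCircle} {i j : ℕ} (hij : j ≠ i)
    (hi : circleBump g ((A ^ (i + 1) : ℕ) : ℝ) x < 0) :
    0 ≤ circleBump g ((A ^ (j + 1) : ℕ) : ℝ) x := by
  by_contra! hj
  wlog hlt : i < j generalizing i j
  · exact this hij.symm hj hi (hij.lt_of_le (not_lt.1 hlt))
  obtain ⟨hri, -⟩ := hg.inner_lt_of_circleBump_neg (Nat.cast_nonneg _) hi
  obtain ⟨-, hjR⟩ := hg.inner_lt_of_circleBump_neg (Nat.cast_nonneg _) hj
  refine hjR.not_ge (hAr.trans ?_)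
  calc (A : ℝ) * r ≤ A * ((A ^ (i + 1) : ℕ) * ‖x‖) := by gcongr
    _ = (A ^ (i + 1 + 1) : ℕ) * ‖x‖ := by push_cast; ring
    _ ≤ (A ^ (j + 1) : ℕ) * ‖x‖ := by gcongr; omega

lemma IsPlateau.neg_inv_sum_le_bumpAverage (hg : IsPlateau g r R) (hA : 1 ≤ A)
    (hAr : R ≤ A * r) (hw : ∀ j, 0 ≤ w j) (hw₁ : ∀ j, w j ≤ 1) (x : UnitAddCircle) :
    -(∑ j ∈ Finset.range J, w j)⁻¹ ≤ bumpAverage g A w J x := by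
  have hsum : -1 ≤ ∑ j ∈ Finset.range J, w j * circleBump g ((A ^ (j + 1) : ℕ) : ℝ) x := by
    by_cases hneg : ∃ i ∈ Finset.range J, circleBump g ((A ^ (i + 1) : ℕ) : ℝ) x < 0
    · obtain ⟨i, hiJ, hi⟩ := hneg
      have hothers : 0 ≤ ∑ j ∈ (Finset.range J).erase i,
          w j * circleBump g ((A ^ (j + 1) : ℕ) : ℝ) x :=
        Finset.sum_nonneg fun j hj => mul_nonneg (hw j)
          (hg.circleBump_pow_nonneg_of_ne hA hAr (Finset.ne_of_mem_erase hj) hi)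
      have hone : -1 ≤ circleBump g ((A ^ (i + 1) : ℕ) : ℝ) x := (abs_le.1 (hg.abs_le_one _)).1
      rw [← Finset.add_sum_erase _ _ hiJ]
      nlinarith [hw i, hw₁ i]
    · push Not at hneg
      linarith [Finset.sum_nonneg fun j hj => mul_nonneg (hw j) (hneg j hj)]
  rw [bumpAverage, ← one_div, ← neg_div]
  exact div_le_div_of_nonneg_right hsum (Finset.sum_nonneg fun j _ => hw j)

lemma IsPlateau.eventually_bumpAverage_eq_one (hg : IsPlateau g r R)
    (hw : ∑ j ∈ Finset.range J, w j ≠ 0) :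
    ∀ᶠ x in 𝓝 0, bumpAverage g A w J x = 1 := by
  have hbump (N : ℝ) : ∀ᶠ x in 𝓝 (0 : UnitAddCircle), circleBump g N x = 1 := by
    have hlim : Tendsto (fun x : UnitAddCircle => |N * ‖x‖|) (𝓝 0) (𝓝 0) :=
      Continuous.tendsto' (by fun_prop) _ _ (by simp only [norm_zero, mul_zero, abs_zero])
    filter_upwards [hlim.eventually_le_const hg.inner_pos] with x hx using hg.eq_one _ hx
  filter_upwards [(eventually_all_finset (Finset.range J)).2 fun j _ =>
    hbump ((A ^ (j + 1) : ℕ) : ℝ)] with x hx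
  rw [bumpAverage, div_eq_one_iff_eq hw]
  exact Finset.sum_congr rfl fun j hj => by rw [hx j hj, mul_one]

lemma fc_bumpAverage (hg : Continuous g) (A : ℕ) (w : ℕ → ℝ) (J : ℕ) (m : ℤ) :
    fc (bumpAverage g A w J) m = ∑ j ∈ Finset.range J,
      ((w j / ∑ i ∈ Finset.range J, w i : ℝ) : ℂ) *
        fc (circleBump g ((A ^ (j + 1) : ℕ) : ℝ)) m := by
  have hint (N : ℝ) : Integrable (fun x => fourier (-m) x * (circleBump g N x : ℂ))
      AddCircle.haarAddCircle :=
    integrable_fourier_mul (Continuous.integrable_of_hasCompactSupport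
      (Complex.continuous_ofReal.comp (continuous_circleBump hg N)) (.of_compactSpace _)) _
  simp only [fc, fourierCoeff, smul_eq_mul, ← integral_const_mul]
  rw [← integral_finsetSum _ fun j _ => (hint _).const_mul _]
  refine integral_congr_ae (Eventually.of_forall fun x => ?_)
  simp only [bumpAverage, Complex.ofReal_div, Complex.ofReal_sum, Complex.ofReal_mul,
    Finset.sum_div, Finset.mul_sum]
  exact Finset.sum_congr rfl fun j _ => by ring

lemma tsum_enorm_fc_bumpAverage_le (hg : Continuous g) (hw : ∀ j, 0 ≤ w j) {B : ℝ≥0∞}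
    (hB : ∀ j, ∑' m, ‖fc (circleBump g ((A ^ (j + 1) : ℕ) : ℝ)) m‖ₑ ≤ B) :
    ∑' m, ‖fc (bumpAverage g A w J) m‖ₑ ≤ B := by
  set S := ∑ i ∈ Finset.range J, w i
  have hS : 0 ≤ S := Finset.sum_nonneg fun i _ => hw i
  calc ∑' m, ‖fc (bumpAverage g A w J) m‖ₑ
      ≤ ∑' m, ∑ j ∈ Finset.range J,
          ENNReal.ofReal (w j / S) * ‖fc (circleBump g ((A ^ (j + 1) : ℕ) : ℝ)) m‖ₑ :=
        ENNReal.tsum_le_tsum fun m => by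
          rw [fc_bumpAverage hg]
          refine (enorm_sum_le _ _).trans_eq (Finset.sum_congr rfl fun j _ => ?_)
          rw [enorm_mul, ← ofReal_norm (Complex.ofReal _),
            Complex.norm_of_nonneg (div_nonneg (hw j) hS)]
    _ = ∑ j ∈ Finset.range J,
          ENNReal.ofReal (w j / S) * ∑' m, ‖fc (circleBump g ((A ^ (j + 1) : ℕ) : ℝ)) m‖ₑ := by
        rw [Summable.tsum_finsetSum fun _ _ => ENNReal.summable]
        simp only [ENNReal.tsum_mul_left]
    _ ≤ ∑ j ∈ Finset.range J, ENNReal.ofReal (w j / S) * B := by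
        gcongr with j
        exact hB j
    _ = ENNReal.ofReal (S / S) * B := by
        rw [← Finset.sum_mul, ← ENNReal.ofReal_sum_of_nonneg fun j _ => div_nonneg (hw j) hS,
          ← Finset.sum_div]
    _ ≤ B := mul_le_of_le_one_left' (ENNReal.ofReal_le_one.2 (div_self_le_one S))

lemma norm_fc_bumpAverage_mul_le (hg : Continuous g) (hw : ∀ j, 0 ≤ w j) (hA : 2 ≤ A)
    {L K : ℝ} (hL : 0 ≤ L) (hK : 0 ≤ K) (m : ℤ)
    (hbump : ∀ j, w j * (‖fc (circleBump g ((A ^ (j + 1) : ℕ) : ℝ)) m‖ * L) ≤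
      K * min (|(m : ℝ)| / (A ^ (j + 1) : ℕ)) ((A ^ (j + 1) : ℕ) / |(m : ℝ)|)) :
    ‖fc (bumpAverage g A w J) m‖ * L ≤ K * 8 / ∑ j ∈ Finset.range J, w j := by
  set S := ∑ i ∈ Finset.range J, w i
  have hS : 0 ≤ S := Finset.sum_nonneg fun i _ => hw i
  calc ‖fc (bumpAverage g A w J) m‖ * L
      ≤ (∑ j ∈ Finset.range J, w j / S * ‖fc (circleBump g ((A ^ (j + 1) : ℕ) : ℝ)) m‖) * L := by
        rw [fc_bumpAverage hg]
        gcongr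
        refine (norm_sum_le _ _).trans_eq (Finset.sum_congr rfl fun j _ => ?_)
        rw [norm_mul, Complex.norm_of_nonneg (div_nonneg (hw j) hS)]
    _ = (∑ j ∈ Finset.range J,
          w j * (‖fc (circleBump g ((A ^ (j + 1) : ℕ) : ℝ)) m‖ * L)) / S := by
        rw [Finset.sum_mul, Finset.sum_div]
        exact Finset.sum_congr rfl fun j _ => by ring
    _ ≤ (K * ∑ j ∈ Finset.range J,
          min (|(m : ℝ)| / (A : ℝ) ^ (j + 1)) ((A : ℝ) ^ (j + 1) / |(m : ℝ)|)) / S := by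
        rw [Finset.mul_sum]
        refine div_le_div_of_nonneg_right (Finset.sum_le_sum fun j _ => ?_) hS
        simpa only [Nat.cast_pow] using hbump j
    _ ≤ K * 8 / S := by
        gcongr
        exact sum_min_div_pow_le_eight (abs_nonneg _) (by exact_mod_cast hA) J

lemma eLpNorm_weightMeasure_sq_le_of_norm_mul_le {u : ℤ → ℂ} {s : ℝ} {B : ℝ≥0∞}
    (hu : ∀ m : ℤ, ‖u m‖ * lam m.natAbs ≤ s) (hB : ∑' m, ‖u m‖ₑ ≤ B) :
    eLpNorm u 2 (weightMeasure lam) ^ 2 ≤ ENNReal.ofReal s * B := by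
  rw [eLpNorm_weightMeasure_sq]
  calc ∑' m : ℤ, ‖u m‖ₑ ^ 2 * ENNReal.ofReal (lam m.natAbs)
      ≤ ∑' m : ℤ, ENNReal.ofReal s * ‖u m‖ₑ := ENNReal.tsum_le_tsum fun m => by
        rw [sq, mul_right_comm, ← ofReal_norm, ← ENNReal.ofReal_mul (norm_nonneg _)]
        gcongr
        exact hu m
    _ ≤ ENNReal.ofReal s * B := by rw [ENNReal.tsum_mul_left]; gcongr

/-- The weights of the bumps in the cutoff: they are bounded, and their sum diverges together with
`∑ 1 / λ_n`. -/
def lacunaryWeight (lam : ℕ → ℝ) (A j : ℕ) : ℝ := min 1 ((A ^ (j + 1) : ℕ) / lam (A ^ (j + 1)))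

lemma lacunaryWeight_nonneg (hlam : ∀ n, 0 ≤ lam n) (A j : ℕ) : 0 ≤ lacunaryWeight lam A j :=
  le_min zero_le_one (div_nonneg (Nat.cast_nonneg _) (hlam _))

lemma IsModerate.tendsto_sum_lacunaryWeight (h : IsModerate lam C M) (hlam : ∀ n, 0 < lam n)
    (hC : 0 ≤ C) (hdiv : ¬ Summable fun n : ℕ => 1 / lam (n + 1)) (hA : 2 ≤ A) :
    Tendsto (fun J => ∑ j ∈ Finset.range J, lacunaryWeight lam A j) atTop atTop := by
  rw [← not_summable_iff_tendsto_nat_atTop_of_nonneg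
    (lacunaryWeight_nonneg (fun n => (hlam n).le) A)]
  intro hsum
  have hsum' := summable_of_summable_min_one hsum
  simp only [Nat.cast_pow] at hsum'
  exact h.not_summable_lacunary hlam hC hdiv hA ((summable_nat_add_iff 1).1 hsum')

lemma IsPlateau.norm_fc_bumpAverage_lacunaryWeight_mul_le (hg : IsPlateau g r R) {B : ℝ}
    (hB : 0 ≤ B) (hdecay : ∀ ξ, ‖𝓕 (fun x => (g x : ℂ)) ξ‖ ≤ B * min |ξ| |ξ|⁻¹ ^ (M + 1))
    (h : IsModerate lam C M) (hlam : ∀ n, 0 < lam n) (hC : 0 ≤ C) (hA : 2 ≤ A)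
    (hAR : ∀ j, 2 * R ≤ (A ^ (j + 1) : ℕ)) (J : ℕ) (m : ℤ) :
    ‖fc (bumpAverage g A (lacunaryWeight lam A) J) m‖ * lam m.natAbs ≤
      B * C * 2 ^ M * 8 / ∑ j ∈ Finset.range J, lacunaryWeight lam A j := by
  have hlam₀ (n : ℕ) : 0 ≤ lam n := (hlam n).le
  refine norm_fc_bumpAverage_mul_le hg.contDiff.continuous (lacunaryWeight_nonneg hlam₀ A) hA
    (hlam₀ _) (by positivity) m fun j => ?_
  exact (mul_le_mul_of_nonneg_right (min_le_right _ _) (mul_nonneg (norm_nonneg _) (hlam₀ _))).trans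
    (hg.div_mul_norm_fc_circleBump_mul_le hB hdecay h hlam hC (Nat.one_le_pow _ _ (by omega))
      (hAR j) m)

lemma exists_cutoff (h : IsModerate lam C M) (hlam : ∀ n, 0 < lam n) (hC : 0 ≤ C)
    (hdiv : ¬ Summable fun n : ℕ => 1 / lam (n + 1)) {s : ℝ} (hs : 0 < s) :
    ∃ φ : UnitAddCircle → ℝ, Continuous φ ∧ (∀ x, -s ≤ φ x) ∧ (∀ x, φ x ≤ 1) ∧
      (∀ᶠ x in 𝓝 0, φ x = 1) ∧
      eLpNorm (fc φ) 2 (weightMeasure lam) ^ 2 ≤ ENNReal.ofReal s := by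
  obtain ⟨g, r, R, hg, D, hD, hdecay⟩ := exists_isPlateau_fourier_le_min (M + 1)
  obtain ⟨B, hB⟩ := hg.exists_tsum_enorm_fc_circleBump_le
  obtain ⟨A, hA⟩ := exists_nat_ge (max 2 (max (2 * R) (R / r)))
  simp only [max_le_iff, div_le_iff₀ hg.inner_pos] at hA
  obtain ⟨hA₂, hAR, hAr⟩ := hA
  replace hA₂ : 2 ≤ A := by exact_mod_cast hA₂
  have hscale (j : ℕ) : 1 ≤ A ^ (j + 1) := Nat.one_le_pow _ _ (by omega)
  have hscaleR (j : ℕ) : 2 * R ≤ (A ^ (j + 1) : ℕ) :=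
    hAR.trans (by exact_mod_cast Nat.le_self_pow j.succ_ne_zero A)
  have hw := lacunaryWeight_nonneg (fun n => (hlam n).le) A
  obtain ⟨J, hJ⟩ := ((h.tendsto_sum_lacunaryWeight hlam hC hdiv hA₂).eventually_ge_atTop
    (max s⁻¹ (D * C * 2 ^ M * 8 * B / s))).exists
  obtain ⟨hJs, hJB⟩ := max_le_iff.1 hJ
  have hS := (inv_pos.2 hs).trans_le hJs
  refine ⟨bumpAverage g A (lacunaryWeight lam A) J, continuous_bumpAverage hg.contDiff.continuous,
    fun x => ?_, hg.bumpAverage_le_one hw, hg.eventually_bumpAverage_eq_one hS.ne', ?_⟩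
  · exact (neg_le_neg (inv_le_of_inv_le₀ hs hJs)).trans
      (hg.neg_inv_sum_le_bumpAverage (by omega) (by linarith) hw (fun j => min_le_left _ _) x)
  · have hl1 := tsum_enorm_fc_bumpAverage_le (J := J) hg.contDiff.continuous hw fun j =>
      hB _ (by exact_mod_cast hscale j) (hscaleR j)
    refine (eLpNorm_weightMeasure_sq_le_of_norm_mul_le
      (hg.norm_fc_bumpAverage_lacunaryWeight_mul_le hD.le hdecay h hlam hC hA₂ hscaleR J)
      hl1).trans ?_
    rw [← ENNReal.ofReal_mul (by positivity)]
    refine ENNReal.ofReal_le_ofReal ?_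
    rw [div_le_iff₀ hs] at hJB
    rw [div_mul_eq_mul_div, div_le_iff₀ hS]
    linarith

end Cutoff

section Mollification

open scoped FourierTransform Convolution

instance : IsProbabilityMeasure hm :=
  inferInstanceAs (IsProbabilityMeasure AddCircle.haarAddCircle)

instance : hm.IsAddHaarMeasure :=
  inferInstanceAs (AddCircle.haarAddCircle (T := 1)).IsAddHaarMeasure

lemma integrable_hm_of_continuous {f : UnitAddCircle → ℝ} (hf : Continuous f) : Integrable f hm :=
  hf.integrable_of_hasCompactSupport (HasCompactSupport.of_compactSpace _)

lemma norm_fc_le_integral_norm (f : UnitAddCircle → ℝ) (n : ℤ) : ‖fc f n‖ ≤ ∫ x, ‖f x‖ ∂hm := by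
  refine (norm_fourierCoeff_le_integral_norm (fun x => (f x : ℂ)) n).trans_eq ?_
  simp only [Complex.norm_real, hm]

lemma fc_zero_eq_integral (f : UnitAddCircle → ℝ) : fc f 0 = ∫ x, f x ∂hm := by
  simp only [fc, fourierCoeff, neg_zero, fourier_zero, one_smul, hm, integral_complex_ofReal]

lemma fc_const_mul (c : ℝ) (f : UnitAddCircle → ℝ) (n : ℤ) :
    fc (fun x => c * f x) n = c * fc f n := by
  simp only [fc, Complex.ofReal_mul]
  exact fourierCoeff.const_mul _ _ _

lemma fc_sub {f g : UnitAddCircle → ℝ} (hf : Integrable f hm) (hg : Integrable g hm) (n : ℤ) :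
    fc (fun x => f x - g x) n = fc f n - fc g n := by
  simp only [fc, fourierCoeff, Complex.ofReal_sub, smul_sub]
  exact integral_sub (integrable_fourier_mul hf.ofReal _) (integrable_fourier_mul hg.ofReal _)

lemma fc_mul {f g : UnitAddCircle → ℝ} (hf : Continuous f) (hfc : Summable (fc f))
    (hg : Integrable g hm) (n : ℤ) :
    fc (fun x => f x * g x) n = ∑' k, fc f k * fc g (n - k) := by
  simp only [fc, Complex.ofReal_mul]
  exact fourierCoeff_mul_of_summable
    (f := ⟨fun x => (f x : ℂ), Complex.continuous_ofReal.comp hf⟩) hfc hg.ofReal n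

lemma fc_convolution {f g : UnitAddCircle → ℝ} (hf : Integrable f hm) (hg : Integrable g hm)
    (n : ℤ) : fc (f ⋆[ContinuousLinearMap.mul ℝ ℝ, hm] g) n = fc f n * fc g n := by
  refine Eq.trans ?_ (fourierCoeff_convolution hf.ofReal hg.ofReal n)
  refine congrArg (fourierCoeff · n) (funext fun x => ?_)
  simp only [convolution, ContinuousLinearMap.mul_apply', ← integral_complex_ofReal,
    Complex.ofReal_mul]
  rfl

lemma measSupport_subset_iff {f : UnitAddCircle → ℝ} {E : Set UnitAddCircle} (hE : IsClosed E) :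
    measSupport f ⊆ E ↔ ∀ᵐ x ∂hm, x ∉ E → f x = 0 := by
  refine ⟨fun h => ?_, fun h =>
    Set.compl_subset_comm.1 (Set.subset_sUnion_of_mem ⟨hE.isOpen_compl, h⟩)⟩
  obtain ⟨T, hT, hTsub, hTunion⟩ := TopologicalSpace.isOpen_sUnion_countable
    {U : Set UnitAddCircle | IsOpen U ∧ ∀ᵐ x ∂hm, x ∈ U → f x = 0} fun U hU => hU.1
  filter_upwards [(ae_ball_iff hT).2 fun U hU => (hTsub hU).2] with x hx hxE
  have hmem : x ∈ ⋃₀ T := hTunion ▸ not_not.1 fun hx' => hxE (h hx')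
  obtain ⟨U, hU, hxU⟩ := hmem
  exact hx U hU hxU

variable {g : ℝ → ℝ} {r R N : ℝ}

lemma IsPlateau.summable_norm_fc_circleBump_mul (hg : IsPlateau g r R) (hN : 2 * R ≤ N) (M : ℕ) :
    Summable fun k : ℤ => ‖fc (circleBump g N) k‖ * (1 + |(k : ℝ)|) ^ M := by
  have hN₀ : 0 < N := by linarith [hg.inner_pos, hg.inner_lt_outer]
  obtain ⟨B, -, hB⟩ := hg.exists_abs_pow_mul_fourier_le (M + 2)
  refine ((Real.summable_one_div_int_pow.2 one_lt_two).mul_left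
    (N⁻¹ * (2 ^ M * (N ^ (M + 2) * B)))).of_norm_bounded_eventually ?_
  filter_upwards [eventually_cofinite_ne 0] with k hk
  have hk₁ : 1 ≤ |(k : ℝ)| := by exact_mod_cast Int.one_le_abs hk
  have hdecay := hB (k / N)
  rw [abs_div, abs_of_pos hN₀, div_pow, div_mul_eq_mul_div, div_le_iff₀ (by positivity)] at hdecay
  rw [Real.norm_of_nonneg (by positivity), hg.fc_circleBump hN, norm_mul, norm_inv,
    Complex.norm_real, Real.norm_of_nonneg hN₀.le, mul_assoc, mul_assoc]
  refine mul_le_mul_of_nonneg_left ?_ (by positivity)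
  rw [mul_one_div, le_div_iff₀ (by positivity), ← sq_abs (k : ℝ)]
  calc ‖𝓕 (fun x => (g x : ℂ)) (k / N)‖ * (1 + |(k : ℝ)|) ^ M * |(k : ℝ)| ^ 2
      ≤ ‖𝓕 (fun x => (g x : ℂ)) (k / N)‖ * (2 * |(k : ℝ)|) ^ M * |(k : ℝ)| ^ 2 := by
        gcongr
        linarith
    _ = 2 ^ M * (|(k : ℝ)| ^ (M + 2) * ‖𝓕 (fun x => (g x : ℂ)) (k / N)‖) := by ring
    _ ≤ 2 ^ M * (N ^ (M + 2) * B) :=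
        mul_le_mul_of_nonneg_left (hdecay.trans_eq (mul_comm _ _)) (by positivity)

/-- The approximate identity obtained from `g` as `N → ∞`: the bump of width `~ 1 / N` around `0`,
of total mass one. -/
def mollifier (g : ℝ → ℝ) (N : ℝ) (x : UnitAddCircle) : ℝ := N / (∫ y, g y) * circleBump g N x

lemma continuous_mollifier (hg : Continuous g) (N : ℝ) : Continuous (mollifier g N) :=
  continuous_const.mul (continuous_circleBump hg N)

lemma mollifier_nonneg (hg : ∀ x, 0 ≤ g x) (hN : 0 ≤ N) (x : UnitAddCircle) :
    0 ≤ mollifier g N x :=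
  mul_nonneg (div_nonneg hN (integral_nonneg hg)) (hg _)

namespace IsPlateau

lemma mollifier_eq_zero (hg : IsPlateau g r R) {x : UnitAddCircle} (hx : R ≤ N * ‖x‖) :
    mollifier g N x = 0 := by
  rw [mollifier, circleBump, hg.eq_zero _ (hx.trans (le_abs_self _)), mul_zero]

lemma integral_pos (hg : IsPlateau g r R) (hg₀ : ∀ x, 0 ≤ g x) : 0 < ∫ x, g x :=
  hg.contDiff.continuous.integral_pos_of_hasCompactSupport_nonneg_nonzero (x := 0)
    hg.hasCompactSupport hg₀ (by
      rw [hg.eq_one 0 (by simpa only [abs_zero] using hg.inner_pos.le)]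
      exact one_ne_zero)

lemma fc_mollifier (hg : IsPlateau g r R) (hN : 2 * R ≤ N) (n : ℤ) :
    fc (mollifier g N) n = ((∫ y, g y : ℝ) : ℂ)⁻¹ * 𝓕 (fun x => (g x : ℂ)) (n / N) := by
  have hN₀ : (N : ℂ) ≠ 0 := by
    exact_mod_cast (by linarith [hg.inner_pos, hg.inner_lt_outer] : (0 : ℝ) < N).ne'
  rw [show mollifier g N = fun x => N / (∫ y, g y) * circleBump g N x from rfl, fc_const_mul,
    hg.fc_circleBump hN]
  push_cast
  field_simp

lemma inv_integral_mul_fourier_zero (hg : IsPlateau g r R) (hg₀ : ∀ x, 0 ≤ g x) :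
    ((∫ y, g y : ℝ) : ℂ)⁻¹ * 𝓕 (fun x => (g x : ℂ)) 0 = 1 := by
  have hzero : 𝓕 (fun x => (g x : ℂ)) 0 = (∫ y, g y : ℝ) := by
    simp only [Real.fourier_real_eq_integral_exp_smul, mul_zero, Complex.ofReal_zero, zero_mul,
      Complex.exp_zero, one_smul, integral_complex_ofReal]
  rw [hzero, inv_mul_cancel₀ (by exact_mod_cast (hg.integral_pos hg₀).ne')]

lemma integral_mollifier (hg : IsPlateau g r R) (hg₀ : ∀ x, 0 ≤ g x) (hN : 2 * R ≤ N) :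
    ∫ x, mollifier g N x ∂hm = 1 := by
  have hfc : fc (mollifier g N) 0 = 1 := by
    rw [hg.fc_mollifier hN, Int.cast_zero, zero_div, hg.inv_integral_mul_fourier_zero hg₀]
  exact_mod_cast (fc_zero_eq_integral _).symm.trans hfc

lemma norm_fc_mollifier_le_one (hg : IsPlateau g r R) (hg₀ : ∀ x, 0 ≤ g x) (hN : 2 * R ≤ N)
    (n : ℤ) : ‖fc (mollifier g N) n‖ ≤ 1 := by
  have hN₀ : 0 ≤ N := by linarith [hg.inner_pos, hg.inner_lt_outer]
  refine (norm_fc_le_integral_norm _ _).trans_eq ?_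
  simp only [Real.norm_of_nonneg (mollifier_nonneg hg₀ hN₀ _), hg.integral_mollifier hg₀ hN]

lemma tendsto_fc_mollifier (hg : IsPlateau g r R) (hg₀ : ∀ x, 0 ≤ g x) (n : ℤ) :
    Tendsto (fun N => fc (mollifier g N) n) atTop (𝓝 1) := by
  have hlim := ((hg.continuous_fourier.tendsto 0).comp
    ((tendsto_id (α := ℝ)).const_div_atTop n)).const_mul ((∫ y, g y : ℝ) : ℂ)⁻¹
  rw [hg.inv_integral_mul_fourier_zero hg₀] at hlim
  refine hlim.congr' ?_
  filter_upwards [eventually_ge_atTop (2 * R)] with N hN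
  exact_mod_cast (hg.fc_mollifier hN n).symm

lemma summable_norm_fc_mollifier_mul (hg : IsPlateau g r R) (hN : 2 * R ≤ N) (M : ℕ) :
    Summable fun k : ℤ => ‖fc (mollifier g N) k‖ * (1 + |(k : ℝ)|) ^ M := by
  refine ((hg.summable_norm_fc_circleBump_mul hN M).mul_left ‖((N / ∫ y, g y : ℝ) : ℂ)‖).congr
    fun k => ?_
  rw [← mul_assoc, ← norm_mul, ← fc_const_mul]
  rfl

end IsPlateau

end Mollification

section Smoothing

open scoped ENNReal Convolution

lemma continuous_convolution_hm {f ρ : UnitAddCircle → ℝ} (hf : Integrable f hm)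
    (hρ : Continuous ρ) : Continuous (f ⋆[ContinuousLinearMap.mul ℝ ℝ, hm] ρ) :=
  (HasCompactSupport.of_compactSpace ρ).continuous_convolution_right _ hf.locallyIntegrable hρ

lemma convolution_hm_mem_Icc {f ρ : UnitAddCircle → ℝ} {b : ℝ}
    (hf : ∀ᵐ x ∂hm, f x ∈ Set.Icc 0 b) (hρ : Continuous ρ) (hρ₀ : ∀ x, 0 ≤ ρ x)
    (hρ₁ : ∫ x, ρ x ∂hm = 1) (x : UnitAddCircle) :
    (f ⋆[ContinuousLinearMap.mul ℝ ℝ, hm] ρ) x ∈ Set.Icc 0 b := by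
  simp only [convolution, ContinuousLinearMap.mul_apply']
  have hnonneg : 0 ≤ᵐ[hm] fun y => f y * ρ (x - y) := by
    filter_upwards [hf] with y hy using mul_nonneg hy.1 (hρ₀ _)
  refine ⟨integral_nonneg_of_ae hnonneg, ?_⟩
  calc ∫ y, f y * ρ (x - y) ∂hm
      ≤ ∫ y, b * ρ (x - y) ∂hm := by
        refine integral_mono_of_nonneg hnonneg ?_ ?_
        · exact integrable_hm_of_continuous (by fun_prop)
        · filter_upwards [hf] with y hy using mul_le_mul_of_nonneg_right hy.2 (hρ₀ _)
    _ = b := by rw [integral_const_mul, integral_sub_left_eq_self, hρ₁, mul_one]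

lemma convolution_hm_eq_zero {f ρ : UnitAddCircle → ℝ} {E : Set UnitAddCircle} {δ : ℝ}
    (hf : ∀ᵐ x ∂hm, x ∉ E → f x = 0) (hρ : ∀ x, δ ≤ ‖x‖ → ρ x = 0) {x : UnitAddCircle}
    (hx : x ∉ Metric.cthickening δ E) : (f ⋆[ContinuousLinearMap.mul ℝ ℝ, hm] ρ) x = 0 := by
  refine integral_eq_zero_of_ae ?_
  filter_upwards [hf] with y hy
  by_cases hyE : y ∈ E
  · have hxy : δ ≤ ‖x - y‖ := by
      rw [← dist_eq_norm]
      exact not_lt.1 fun hlt => hx (Metric.mem_cthickening_of_dist_le x y δ E hyE hlt.le)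
    simp only [ContinuousLinearMap.mul_apply', hρ _ hxy, mul_zero, Pi.zero_apply]
  · simp only [ContinuousLinearMap.mul_apply', hy hyE, zero_mul, Pi.zero_apply]

lemma tendsto_eLpNorm_weightMeasure_mul_sub {ι : Type*} {l : Filter ι} [l.IsCountablyGenerated]
    {lam : ℕ → ℝ} {u : ℤ → ℂ} (hu : MemLp u 2 (weightMeasure lam)) {c : ι → ℤ → ℂ}
    (hc : ∀ᶠ i in l, ∀ n, ‖c i n‖ ≤ 1) (hlim : ∀ n, Tendsto (c · n) l (𝓝 1)) :
    Tendsto (fun i => eLpNorm (fun n => u n * c i n - u n) 2 (weightMeasure lam)) l (𝓝 0) := by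
  have hlintegral : Tendsto (fun i => ∫⁻ n, ‖u n * c i n - u n‖ₑ ^ (2 : ℝ) ∂weightMeasure lam) l
      (𝓝 (∫⁻ _, 0 ∂weightMeasure lam)) := by
    refine tendsto_lintegral_filter_of_dominated_convergence (fun n => ‖2 * u n‖ₑ ^ (2 : ℝ))
      (Eventually.of_forall fun i => measurable_of_countable _) ?_ ?_
      (Eventually.of_forall fun n => ?_)
    · filter_upwards [hc] with i hi
      refine Eventually.of_forall fun n => ENNReal.rpow_le_rpow ?_ two_pos.le
      rw [enorm_le_iff_norm_le, norm_mul, Complex.norm_ofNat, two_mul]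
      refine (norm_sub_le _ _).trans (add_le_add_left ?_ _)
      rw [norm_mul]
      exact mul_le_of_le_one_right (norm_nonneg _) (hi n)
    · exact (lintegral_rpow_enorm_lt_top_of_eLpNorm_lt_top two_ne_zero ENNReal.ofNat_ne_top
        (hu.const_mul 2).2).ne
    · simpa using ((((hlim n).const_mul (u n)).sub_const (u n)).enorm).ennrpow_const (2 : ℝ)
  simp only [lintegral_zero] at hlintegral
  simpa [eLpNorm_eq_lintegral_rpow_enorm_toReal] using hlintegral.ennrpow_const (1 / 2 : ℝ)

lemma exists_smooth_approx {lam : ℕ → ℝ} {f : UnitAddCircle → ℝ} (hfint : Integrable f hm)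
    {b : ℝ} (hf : ∀ᵐ x ∂hm, f x ∈ Set.Icc 0 b) (hfc : MemLp (fc f) 2 (weightMeasure lam))
    {E : Set UnitAddCircle} (hE : ∀ᵐ x ∂hm, x ∉ E → f x = 0) (M : ℕ) {δ : ℝ} (hδ : 0 < δ)
    {η : ℝ≥0∞} (hη : 0 < η) :
    ∃ u : UnitAddCircle → ℝ, Continuous u ∧ (∀ x, u x ∈ Set.Icc 0 b) ∧
      (∀ x, x ∉ Metric.cthickening δ E → u x = 0) ∧
      (Summable fun k : ℤ => ‖fc u k‖ * (1 + |(k : ℝ)|) ^ M) ∧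
      eLpNorm (fc u - fc f) 2 (weightMeasure lam) < η := by
  obtain ⟨g, hg, hg₀⟩ := exists_isPlateau_nonneg
  have hconv := tendsto_eLpNorm_weightMeasure_mul_sub hfc
    ((eventually_ge_atTop 4).mono fun N hN => hg.norm_fc_mollifier_le_one hg₀ (by linarith))
    (hg.tendsto_fc_mollifier hg₀)
  obtain ⟨N, hNη, hN, hNδ⟩ := ((hconv.eventually_lt_const hη).and
    ((eventually_ge_atTop 4).and (eventually_ge_atTop (2 / δ)))).exists
  have hN' : 2 * 2 ≤ N := by linarith
  set ρ := mollifier g N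
  have hρ : Continuous ρ := continuous_mollifier hg.contDiff.continuous N
  have hu (n : ℤ) : fc (f ⋆[ContinuousLinearMap.mul ℝ ℝ, hm] ρ) n = fc f n * fc ρ n :=
    fc_convolution hfint (integrable_hm_of_continuous hρ) n
  refine ⟨f ⋆[ContinuousLinearMap.mul ℝ ℝ, hm] ρ, continuous_convolution_hm hfint hρ,
    convolution_hm_mem_Icc hf hρ (mollifier_nonneg hg₀ (by linarith))
      (hg.integral_mollifier hg₀ hN'), fun x hx => ?_, ?_, ?_⟩
  · refine convolution_hm_eq_zero hE (fun y hy => hg.mollifier_eq_zero ?_) hx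
    rw [div_le_iff₀ hδ] at hNδ
    exact hNδ.trans (mul_le_mul_of_nonneg_left hy (by linarith))
  · refine ((hg.summable_norm_fc_mollifier_mul hN' M).mul_left (∫ x, ‖f x‖ ∂hm)).of_nonneg_of_le
      (fun k => by positivity) fun k => ?_
    rw [hu, norm_mul, mul_assoc]
    gcongr
    exact norm_fc_le_integral_norm f k
  · simpa only [Pi.sub_def, hu] using hNη

lemma eLpNorm_fc_mul_one_sub_sub_le (lam : ℕ → ℝ) {u ψ : UnitAddCircle → ℝ} (hu : Continuous u)
    (hψ : Continuous ψ) {s : ℝ} (hs : 0 ≤ s) :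
    eLpNorm (fc (fun x => (1 + s)⁻¹ * (u x * (1 - ψ x))) - fc u) 2 (weightMeasure lam) ≤
      ENNReal.ofReal s * eLpNorm (fc u) 2 (weightMeasure lam) +
        eLpNorm (fc fun x => u x * ψ x) 2 (weightMeasure lam) := by
  have hdecomp : fc (fun x => (1 + s)⁻¹ * (u x * (1 - ψ x))) - fc u =
      (-((1 + s)⁻¹ : ℝ) : ℂ) • ((s : ℂ) • fc u + fc fun x => u x * ψ x) := by
    ext n
    have hne : (1 + s : ℂ) ≠ 0 := by exact_mod_cast (by positivity : (1 + s) ≠ 0)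
    have hprod : Integrable (fun x => u x * ψ x) hm := integrable_hm_of_continuous (hu.mul hψ)
    simp only [mul_one_sub, Pi.sub_apply, Pi.smul_apply, Pi.add_apply, smul_eq_mul, fc_const_mul]
    rw [fc_sub (integrable_hm_of_continuous hu) hprod]
    push_cast
    field_simp
    ring
  have hcoef : ‖(-((1 + s)⁻¹ : ℝ) : ℂ)‖ₑ ≤ 1 := by
    rw [enorm_neg, ← ofReal_norm, Complex.norm_real, Real.norm_of_nonneg (by positivity),
      ENNReal.ofReal_le_one]
    exact inv_le_one_of_one_le₀ (by linarith)
  rw [hdecomp, eLpNorm_const_smul]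
  refine (mul_le_of_le_one_left' hcoef).trans ((eLpNorm_add_le ?_ ?_ one_le_two).trans_eq ?_)
  · exact (measurable_of_countable _).aestronglyMeasurable
  · exact (measurable_of_countable _).aestronglyMeasurable
  · rw [eLpNorm_const_smul, ← ofReal_norm, Complex.norm_real, Real.norm_of_nonneg hs]

variable {lam : ℕ → ℝ} {C : ℝ} {M : ℕ}

lemma IsModerate.exists_eLpNorm_fc_mul_sq_le (h : IsModerate lam C M) (hlam : ∀ n, 0 ≤ lam n)
    (hC : 0 ≤ C) {u : UnitAddCircle → ℝ} (hu : Continuous u)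
    (hsum : Summable fun k : ℤ => ‖fc u k‖ * (1 + |(k : ℝ)|) ^ M) :
    ∃ K : ℝ≥0∞, K ≠ ∞ ∧ ∀ ψ, Integrable ψ hm →
      eLpNorm (fc fun x => u x * ψ x) 2 (weightMeasure lam) ^ 2 ≤
        K * eLpNorm (fc ψ) 2 (weightMeasure lam) ^ 2 := by
  have hsum₀ : Summable fun k => ‖fc u k‖ :=
    hsum.of_nonneg_of_le (fun k => norm_nonneg _) fun k =>
      le_mul_of_one_le_right (norm_nonneg _) (one_le_pow₀ (by linarith [abs_nonneg (k : ℝ)]))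
  refine ⟨(∑' k, ‖fc u k‖ₑ) * ∑' k : ℤ, ‖fc u k‖ₑ * ENNReal.ofReal (C * (1 + |(k : ℝ)|) ^ M),
    ENNReal.mul_ne_top ?_ ?_, fun ψ hψ => ?_⟩
  · simpa only [ofReal_norm] using hsum₀.tsum_ofReal_ne_top
  · have hweighted := (hsum.mul_left C).tsum_ofReal_ne_top
    simpa only [mul_left_comm C, ENNReal.ofReal_mul (norm_nonneg _), ofReal_norm] using hweighted
  · rw [funext (fc_mul hu hsum₀.of_norm hψ)]
    exact h.eLpNorm_conv_sq_le hlam hC (fc u) (fc ψ)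

lemma exists_cutoff_at (h : IsModerate lam C M) (hlam : ∀ n, 0 < lam n) (hC : 0 ≤ C)
    (hdiv : ¬Summable fun n => 1 / lam (n + 1)) {s : ℝ} (hs : 0 < s) (x₀ : UnitAddCircle) :
    ∃ ψ : UnitAddCircle → ℝ, Continuous ψ ∧ (∀ x, -s ≤ ψ x) ∧ (∀ x, ψ x ≤ 1) ∧
      (∀ᶠ x in 𝓝 x₀, ψ x = 1) ∧ eLpNorm (fc ψ) 2 (weightMeasure lam) ^ 2 ≤ ENNReal.ofReal s := by
  obtain ⟨φ, hφ, hφs, hφ₁, hφone, hφnorm⟩ := exists_cutoff h hlam hC hdiv hs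
  refine ⟨fun x => φ (x - x₀), hφ.comp (continuous_sub_right x₀), fun x => hφs _, fun x => hφ₁ _,
    (continuous_sub_right x₀).tendsto' x₀ 0 (sub_self x₀) |>.eventually hφone, ?_⟩
  have hnorm : eLpNorm (fc fun x => φ (x - x₀)) 2 (weightMeasure lam) =
      eLpNorm (fc φ) 2 (weightMeasure lam) := eLpNorm_congr_norm_ae (Eventually.of_forall
    (norm_fourierCoeff_comp_sub_right (fun x => (φ x : ℂ)) x₀))
  rwa [hnorm]

lemma exists_punctured_approx (h : IsModerate lam C M)
    (hlam : ∀ n, 0 < lam n) (hC : 0 ≤ C) (hdiv : ¬Summable fun n => 1 / lam (n + 1))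
    {u : UnitAddCircle → ℝ} (hu : Continuous u) {b : ℝ} (hub : ∀ x, u x ∈ Set.Icc 0 b)
    (hfc : MemLp (fc u) 2 (weightMeasure lam))
    (hsum : Summable fun k : ℤ => ‖fc u k‖ * (1 + |(k : ℝ)|) ^ M) (x₀ : UnitAddCircle)
    {η : ℝ≥0∞} (hη : 0 < η) :
    ∃ v : UnitAddCircle → ℝ, Continuous v ∧ (∀ x, v x ∈ Set.Icc 0 b) ∧
      (∀ x, u x = 0 → v x = 0) ∧ (∀ᶠ x in 𝓝 x₀, v x = 0) ∧
      eLpNorm (fc v - fc u) 2 (weightMeasure lam) < η := by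
  obtain ⟨K, hK, hmul⟩ := h.exists_eLpNorm_fc_mul_sq_le (fun n => (hlam n).le) hC hu hsum
  set A := eLpNorm (fc u) 2 (weightMeasure lam)
  have herr : Tendsto (fun s : ℝ => ENNReal.ofReal s * A + (K * ENNReal.ofReal s) ^ (1 / 2 : ℝ))
      (𝓝[>] 0) (𝓝 0) := by
    have hs : Tendsto ENNReal.ofReal (𝓝[>] 0) (𝓝 0) :=
      (ENNReal.continuous_ofReal.tendsto' 0 0 ENNReal.ofReal_zero).mono_left
        nhdsWithin_le_nhds
    have hA := ENNReal.Tendsto.mul_const hs (Or.inr hfc.2.ne)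
    have hsqrt := (ENNReal.Tendsto.const_mul hs (Or.inr hK)).ennrpow_const (1 / 2 : ℝ)
    simpa using hA.add hsqrt
  obtain ⟨s, hsη, hs : 0 < s⟩ :=
    ((herr.eventually_lt_const hη).and self_mem_nhdsWithin).exists
  obtain ⟨ψ, hψ, hψs, hψ₁, hψone, hψnorm⟩ := exists_cutoff_at h hlam hC hdiv hs x₀
  refine ⟨fun x => (1 + s)⁻¹ * (u x * (1 - ψ x)), by fun_prop, fun x => ?_, fun x hx => ?_, ?_, ?_⟩
  · have hψ₁' : 0 ≤ 1 - ψ x := sub_nonneg.2 (hψ₁ x)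
    refine ⟨mul_nonneg (by positivity) (mul_nonneg (hub x).1 hψ₁'), ?_⟩
    rw [inv_mul_le_iff₀ (by positivity), mul_comm (1 + s)]
    exact mul_le_mul (hub x).2 (by linarith [hψs x]) hψ₁' ((hub x).1.trans (hub x).2)
  · simp only [hx, zero_mul, mul_zero]
  · filter_upwards [hψone] with x hx
    simp only [hx, sub_self, mul_zero]
  · refine lt_of_le_of_lt ((eLpNorm_fc_mul_one_sub_sub_le lam hu hψ hs.le).trans ?_) hsη
    refine add_le_add_right ?_ _
    rw [one_div, ENNReal.le_rpow_inv_iff two_pos, ENNReal.rpow_ofNat]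
    refine (hmul ψ (integrable_hm_of_continuous hψ)).trans ?_
    gcongr

end Smoothing

section Distances

variable {lam : ℕ → ℝ}

lemma dlam_eq_toReal_eLpNorm (hlam : ∀ n, 0 ≤ lam n) (f g : UnitAddCircle → ℝ) :
    dlam lam f g = (eLpNorm (fc f - fc g) 2 (weightMeasure lam)).toReal :=
  (toReal_eLpNorm_weightMeasure hlam (fc f - fc g)).symm

lemma dC_nonneg (E K : Set UnitAddCircle) : 0 ≤ dC E K :=
  add_nonneg (Real.iSup_nonneg fun _ => Metric.infDist_nonneg)
    (Real.iSup_nonneg fun _ => Metric.infDist_nonneg)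

variable {E K : Set UnitAddCircle}

lemma infDist_le_hausdorffDist_circle (hE : E.Nonempty) (hK : K.Nonempty) (x : E) :
    Metric.infDist (x : UnitAddCircle) K ≤ Metric.hausdorffDist E K :=
  Metric.infDist_le_hausdorffDist_of_mem x.2 <|
    Metric.hausdorffEDist_ne_top_of_nonempty_of_bounded hE hK
      (Metric.isBounded_of_compactSpace) (Metric.isBounded_of_compactSpace)

lemma hausdorffDist_le_dC (hE : E.Nonempty) (hK : K.Nonempty) :
    Metric.hausdorffDist E K ≤ dC E K := by
  refine Metric.hausdorffDist_le_of_infDist (dC_nonneg E K) (fun x hx => ?_) (fun x hx => ?_)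
  · exact (le_ciSup (f := fun x : E => Metric.infDist (x : UnitAddCircle) K)
      ⟨_, Set.forall_mem_range.2 (infDist_le_hausdorffDist_circle hE hK)⟩ ⟨x, hx⟩).trans
        (le_add_of_nonneg_right (Real.iSup_nonneg fun _ => Metric.infDist_nonneg))
  · exact (le_ciSup (f := fun x : K => Metric.infDist (x : UnitAddCircle) E)
      ⟨_, Set.forall_mem_range.2 (infDist_le_hausdorffDist_circle hK hE)⟩ ⟨x, hx⟩).trans
        (le_add_of_nonneg_left (Real.iSup_nonneg fun _ => Metric.infDist_nonneg))

lemma dC_le_two_mul_hausdorffDist (hE : E.Nonempty) (hK : K.Nonempty) :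
    dC E K ≤ 2 * Metric.hausdorffDist E K := by
  have := hE.to_subtype
  have := hK.to_subtype
  rw [two_mul]
  refine add_le_add (ciSup_le (infDist_le_hausdorffDist_circle hE hK)) ?_
  rw [Metric.hausdorffDist_comm]
  exact ciSup_le (infDist_le_hausdorffDist_circle hK hE)

end Distances

section PairSpace

open TopologicalSpace (NonemptyCompacts)

variable {lam : ℕ → ℝ}

namespace LPair

lemma integrable (p : LPair lam) : Integrable p.f hm := p.memLp.integrable one_le_two

lemma memLp_fc (p : LPair lam) : MemLp (fc p.f) 2 (weightMeasure lam) :=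
  memLp_weightMeasure_of_summable p.sum

/-- The second component of a pair as a point of the Hausdorff hyperspace of the circle. -/
def nonemptyCompacts (p : LPair lam) : NonemptyCompacts UnitAddCircle := ⟨⟨p.E, p.cpt⟩, p.nonempty⟩

/-- The pair `(f, E)` as the point `(f̂, E)` of `ℓ²(λ)` times the hyperspace of the circle. The
maximum metric of this product is equivalent to `dPair`, so it supplies the topology of `X`. -/
def embed (p : LPair lam) : Lp ℂ 2 (weightMeasure lam) × NonemptyCompacts UnitAddCircle :=
  (p.memLp_fc.toLp (fc p.f), p.nonemptyCompacts)

instance : PseudoMetricSpace (LPair lam) := PseudoMetricSpace.induced embed inferInstance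

lemma isometry_embed : Isometry (embed (lam := lam)) := Isometry.of_dist_eq fun _ _ => rfl

lemma dist_eq_max (p q : LPair lam) :
    dist p q = max (eLpNorm (fc p.f - fc q.f) 2 (weightMeasure lam)).toReal
      (Metric.hausdorffDist p.E q.E) := by
  rw [← isometry_embed.dist_eq, Prod.dist_eq, embed, embed, Lp.dist_edist, Lp.edist_toLp_toLp,
    Metric.NonemptyCompacts.dist_eq]
  rfl

lemma dist_le_dPair (hlam : ∀ n, 0 ≤ lam n) (p q : LPair lam) : dist p q ≤ dPair lam p q := by
  rw [dist_eq_max, dPair, dlam_eq_toReal_eLpNorm hlam]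
  refine max_le (le_add_of_nonneg_right (dC_nonneg _ _)) ?_
  exact (hausdorffDist_le_dC p.nonempty q.nonempty).trans
    (le_add_of_nonneg_left ENNReal.toReal_nonneg)

lemma dPair_le_three_mul_dist (hlam : ∀ n, 0 ≤ lam n) (p q : LPair lam) :
    dPair lam p q ≤ 3 * dist p q := by
  rw [dist_eq_max, dPair, dlam_eq_toReal_eLpNorm hlam]
  have hC := dC_le_two_mul_hausdorffDist p.nonempty q.nonempty
  set a := (eLpNorm (fc p.f - fc q.f) 2 (weightMeasure lam)).toReal
  set b := Metric.hausdorffDist p.E q.E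
  linarith [le_max_left a b, le_max_right a b]

lemma exists_dPair_lt_imp_mem (hlam : ∀ n, 0 ≤ lam n) {U : Set (LPair lam)} (hU : IsOpen U)
    {p : LPair lam} (hp : p ∈ U) : ∃ η : ℝ, 0 < η ∧ ∀ q, dPair lam p q < η → q ∈ U := by
  obtain ⟨η, hη, hball⟩ := Metric.isOpen_iff.1 hU p hp
  exact ⟨η, hη, fun q hq => hball (Metric.mem_ball'.2 ((dist_le_dPair hlam p q).trans_lt hq))⟩

lemma exists_mem_dPair_lt (hlam : ∀ n, 0 ≤ lam n) {U : Set (LPair lam)} (hU : Dense U)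
    (p : LPair lam) {η : ℝ} (hη : 0 < η) : ∃ q ∈ U, dPair lam p q < η := by
  obtain ⟨q, hq, hdist⟩ := hU.exists_dist_lt p (div_pos hη three_pos)
  exact ⟨q, hq, (dPair_le_three_mul_dist hlam p q).trans_lt ((lt_div_iff₀' three_pos).1 hdist)⟩

lemma continuous_nonemptyCompacts : Continuous (nonemptyCompacts (lam := lam)) :=
  continuous_snd.comp isometry_embed.continuous

lemma isOpen_setOf_notMem (x : UnitAddCircle) : IsOpen {p : LPair lam | x ∉ p.E} := by
  have hset : {p : LPair lam | x ∉ p.E} = {p | 0 < Metric.infDist x p.nonemptyCompacts} :=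
    Set.ext fun p => p.cpt.isClosed.notMem_iff_infDist_pos p.nonempty
  rw [hset]
  exact isOpen_lt continuous_const
    ((Metric.lipschitz_infDist_set x).continuous.comp continuous_nonemptyCompacts)

end LPair

end PairSpace

section Completeness

open TopologicalSpace (NonemptyCompacts)
open scoped ENNReal

lemma enorm_fc_sub_fc_le {f g : UnitAddCircle → ℝ} (hf : MemLp f 2 hm) (hg : MemLp g 2 hm)
    (n : ℤ) : ‖fc f n - fc g n‖ₑ ≤ eLpNorm (f - g) 2 hm := by
  have hint := (hf.sub hg).integrable one_le_two
  rw [← fc_sub (hf.integrable one_le_two) (hg.integrable one_le_two)]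
  calc ‖fc (f - g) n‖ₑ
      ≤ ENNReal.ofReal (∫ x, ‖(f - g) x‖ ∂hm) := by
        rw [← ofReal_norm]
        exact ENNReal.ofReal_le_ofReal (norm_fc_le_integral_norm _ n)
    _ = eLpNorm (f - g) 1 hm := by
        rw [ofReal_integral_norm_eq_lintegral_enorm hint, eLpNorm_one_eq_lintegral_enorm]
    _ ≤ eLpNorm (f - g) 2 hm :=
        eLpNorm_le_eLpNorm_of_exponent_le one_le_two hint.aestronglyMeasurable

lemma hasSum_norm_fc_sq {f : UnitAddCircle → ℝ} (hf : MemLp f 2 hm) :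
    HasSum (fun n => ‖fc f n‖ ^ 2) (∫ x, f x ^ 2 ∂hm) := by
  have hF : MemLp (fun x => (f x : ℂ)) 2 (AddCircle.haarAddCircle (T := 1)) := hf.ofReal
  have hcoe := hF.coeFn_toLp
  convert hasSum_sq_fourierCoeff hF.toLp using 1
  · simp only [fc, fourierCoeff_congr_ae hcoe]
  · refine integral_congr_ae ?_
    filter_upwards [hcoe] with x hx
    rw [hx, Complex.norm_real, Real.norm_eq_abs, sq_abs]

lemma eLpNorm_le_eLpNorm_fc {lam : ℕ → ℝ} (hlam : ∀ n, 1 ≤ lam n) {f : UnitAddCircle → ℝ}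
    (hf : MemLp f 2 hm) : eLpNorm f 2 hm ≤ eLpNorm (fc f) 2 (weightMeasure lam) := by
  have hsq : eLpNorm f 2 hm ^ 2 = ENNReal.ofReal (∫ x, f x ^ 2 ∂hm) := by
    rw [sq_eLpNorm_two, ofReal_integral_eq_lintegral_ofReal hf.integrable_sq
      (Eventually.of_forall fun x => sq_nonneg _)]
    refine lintegral_congr fun x => ?_
    rw [← ofReal_norm, ← ENNReal.ofReal_pow (norm_nonneg _), Real.norm_eq_abs, sq_abs]
  have hsum := hasSum_norm_fc_sq hf
  rw [← ENNReal.pow_le_pow_left_iff two_ne_zero, hsq, ← hsum.tsum_eq,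
    ENNReal.ofReal_tsum_of_nonneg (fun n => sq_nonneg _) hsum.summable,
    eLpNorm_weightMeasure_sq_eq_tsum_ofReal]
  exact ENNReal.tsum_le_tsum fun n => ENNReal.ofReal_le_ofReal
    (le_mul_of_one_le_right (sq_nonneg _) (hlam _))

lemma measSupport_subset_of_tendsto {f : ℕ → UnitAddCircle → ℝ} {g : UnitAddCircle → ℝ}
    (hfg : ∀ᵐ x ∂hm, Tendsto (f · x) atTop (𝓝 (g x))) {E : ℕ → NonemptyCompacts UnitAddCircle}
    {K : NonemptyCompacts UnitAddCircle} (hEK : Tendsto E atTop (𝓝 K))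
    (hfE : ∀ k, measSupport (f k) ⊆ E k) : measSupport g ⊆ K := by
  rw [measSupport_subset_iff K.isCompact.isClosed]
  have hzero := ae_all_iff.2 fun k =>
    (measSupport_subset_iff (E k).isCompact.isClosed).1 (hfE k)
  filter_upwards [hfg, hzero] with x hx hx₀ hxK
  have hpos := (K.isCompact.isClosed.notMem_iff_infDist_pos K.nonempty).1 hxK
  have hlim := ((Metric.lipschitz_infDist_set x).continuous.tendsto K).comp hEK
  refine tendsto_nhds_unique hx (tendsto_const_nhds.congr' ?_)
  filter_upwards [hlim.eventually_const_lt hpos] with k hk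
  exact (hx₀ k fun hxE => hk.ne' (Metric.infDist_zero_of_mem hxE)).symm

namespace LPair

variable {lam : ℕ → ℝ}

lemma dist_toLp_le_dist (hlam : ∀ n, 1 ≤ lam n) (p q : LPair lam) :
    dist (p.memLp.toLp p.f) (q.memLp.toLp q.f) ≤ dist p q := by
  have hfc : fc (p.f - q.f) = fc p.f - fc q.f := funext (fc_sub p.integrable q.integrable)
  rw [dist_eq_max, Lp.dist_edist, Lp.edist_toLp_toLp, ← hfc]
  refine le_max_of_le_left (ENNReal.toReal_mono ?_ ?_)
  · exact hfc ▸ (p.memLp_fc.sub q.memLp_fc).2.ne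
  · exact eLpNorm_le_eLpNorm_fc hlam (p.memLp.sub q.memLp)

lemma fc_ae_eq_of_tendsto {p : ℕ → LPair lam} {g : Lp ℝ 2 hm} {c : Lp ℂ 2 (weightMeasure lam)}
    (hg : Tendsto (fun k => (p k).memLp.toLp (p k).f) atTop (𝓝 g))
    (hc : Tendsto (fun k => (p k).memLp_fc.toLp (fc (p k).f)) atTop (𝓝 c)) :
    fc g =ᵐ[weightMeasure lam] c := by
  have hL2 : Tendsto (fun k => eLpNorm ((p k).f - ⇑g) 2 hm) atTop (𝓝 0) := by
    rw [← Lp.toLp_coeFn g (Lp.memLp g)] at hg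
    exact (Lp.tendsto_Lp_iff_tendsto_eLpNorm'' _ _ _ _).1 hg
  have hcoeff (n : ℤ) : Tendsto (fun k => fc (p k).f n) atTop (𝓝 (fc g n)) :=
    tendsto_iff_edist_tendsto_0.2 <| tendsto_of_tendsto_of_tendsto_of_le_of_le tendsto_const_nhds
      hL2 (fun k => zero_le) fun k => by
        rw [edist_eq_enorm_sub]
        exact enorm_fc_sub_fc_le (p k).memLp (Lp.memLp g) n
  obtain ⟨ns, hns, hae⟩ := (tendstoInMeasure_of_tendsto_Lp hc).exists_seq_tendsto_ae
  filter_upwards [hae, ae_all_iff.2 fun k => (p k).memLp_fc.coeFn_toLp] with n hn hcoe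
  simp only [hcoe] at hn
  exact tendsto_nhds_unique ((hcoeff n).comp hns.tendsto_atTop) hn

lemma completeSpace (hlam : ∀ n, 1 ≤ lam n) : CompleteSpace (LPair lam) := by
  refine Metric.complete_of_cauchySeq_tendsto fun p hp => ?_
  obtain ⟨⟨c, K⟩, hcK⟩ := cauchySeq_tendsto_of_complete <|
    isometry_embed.uniformContinuous.comp_cauchySeq hp
  have hc := (continuous_fst.tendsto _).comp hcK
  have hK := (continuous_snd.tendsto _).comp hcK
  obtain ⟨g, hg⟩ := cauchySeq_tendsto_of_complete <|
    (LipschitzWith.mk_one (dist_toLp_le_dist hlam)).uniformContinuous.comp_cauchySeq hp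
  have hgc : fc g =ᵐ[weightMeasure lam] c := fc_ae_eq_of_tendsto hg hc
  obtain ⟨ns, hns, hae⟩ := (tendstoInMeasure_of_tendsto_Lp hg).exists_seq_tendsto_ae
  have hlim : ∀ᵐ x ∂hm, Tendsto (fun i => (p (ns i)).f x) atTop (𝓝 (g x)) := by
    filter_upwards [hae, ae_all_iff.2 fun k => (p k).memLp.coeFn_toLp] with x hx hcoe
    simpa only [Function.comp_apply, hcoe] using hx
  let q : LPair lam :=
    { f := g
      E := K
      memLp := Lp.memLp g
      bdd := by
        filter_upwards [hlim, ae_all_iff.2 fun i => (p (ns i)).bdd] with x hx hbdd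
        exact isClosed_Icc.mem_of_tendsto hx (Eventually.of_forall hbdd)
      sum := (memLp_weightMeasure_iff (fun n => zero_le_one.trans (hlam n)) _).1
        ((memLp_congr_ae hgc).2 (Lp.memLp c))
      cpt := K.isCompact
      nonempty := K.nonempty
      supp := measSupport_subset_of_tendsto hlim (hK.comp hns.tendsto_atTop)
        fun i => (p (ns i)).supp }
  have hq : q.embed = (c, K) := Prod.ext (Lp.ext (q.memLp_fc.coeFn_toLp.trans hgc)) rfl
  exact ⟨q, isometry_embed.isUniformInducing.isInducing.tendsto_nhds_iff.2 (hq ▸ hcK)⟩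

end LPair

end Completeness

section Density

open scoped ENNReal

lemma exists_notMem_ball_dist_le {r : ℝ} (hr : 0 ≤ r) (hr' : r ≤ 1 / 2) (x₀ e : UnitAddCircle) :
    ∃ e' ∉ Metric.ball x₀ r, dist e e' ≤ 2 * r := by
  by_cases he : e ∈ Metric.ball x₀ r
  · have hnorm : ‖(r : UnitAddCircle)‖ = r := by
      rw [(AddCircle.norm_coe_eq_abs_iff (p := 1) one_ne_zero).2, abs_of_nonneg hr]
      rwa [abs_of_nonneg hr, abs_one]
    have hdist : dist (x₀ + r) x₀ = r := by rw [dist_eq_norm, add_sub_cancel_left, hnorm]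
    refine ⟨x₀ + r, fun hmem => (Metric.mem_ball.1 hmem).ne hdist, ?_⟩
    linarith [dist_triangle_right e (x₀ + r) x₀, Metric.mem_ball.1 he]
  · exact ⟨e, he, by rw [dist_self]; positivity⟩

lemma exists_mem_cthickening_diff_ball {E : Set UnitAddCircle} {δ r : ℝ} (hr : 0 ≤ r)
    (hr' : r ≤ 1 / 2) (hrδ : 2 * r ≤ δ) (x₀ : UnitAddCircle) {e : UnitAddCircle} (he : e ∈ E) :
    ∃ e' ∈ Metric.cthickening δ E \ Metric.ball x₀ r, dist e e' ≤ δ := by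
  obtain ⟨e', he', hdist⟩ := exists_notMem_ball_dist_le hr hr' x₀ e
  have hδ := hdist.trans hrδ
  exact ⟨e', ⟨Metric.mem_cthickening_of_dist_le e' e δ E he (dist_comm e e' ▸ hδ), he'⟩, hδ⟩

lemma hausdorffDist_cthickening_diff_ball_le {E : Set UnitAddCircle} (hE : IsCompact E) {δ r : ℝ}
    (hr : 0 ≤ r) (hr' : r ≤ 1 / 2) (hrδ : 2 * r ≤ δ) (x₀ : UnitAddCircle) :
    Metric.hausdorffDist E (Metric.cthickening δ E \ Metric.ball x₀ r) ≤ δ := by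
  have hδ : 0 ≤ δ := by linarith
  refine Metric.hausdorffDist_le_of_mem_dist hδ
    (fun e he => exists_mem_cthickening_diff_ball hr hr' hrδ x₀ he) fun x hx => ?_
  simpa only [hE.cthickening_eq_biUnion_closedBall hδ, Set.mem_iUnion₂, exists_prop,
    Metric.mem_closedBall] using hx.1

namespace LPair

variable {lam : ℕ → ℝ} {C : ℝ} {M : ℕ}

lemma exists_approx_eventually_eq_zero (h : IsModerate lam C M) (hlam : ∀ n, 0 < lam n)
    (hC : 0 ≤ C) (hdiv : ¬Summable fun n => 1 / lam (n + 1)) (p : LPair lam) (x₀ : UnitAddCircle)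
    {δ : ℝ} (hδ : 0 < δ) {η : ℝ≥0∞} (hη : 0 < η) :
    ∃ v : UnitAddCircle → ℝ, Continuous v ∧ (∀ x, v x ∈ Set.Icc 0 2) ∧
      (∀ x, x ∉ Metric.cthickening δ p.E → v x = 0) ∧ (∀ᶠ x in 𝓝 x₀, v x = 0) ∧
      eLpNorm (fc v - fc p.f) 2 (weightMeasure lam) < η := by
  have hη₂ : 0 < η / 2 := ENNReal.half_pos hη.ne'
  have hmeas (w : ℤ → ℂ) : AEStronglyMeasurable w (weightMeasure lam) :=
    (measurable_of_countable w).aestronglyMeasurable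
  obtain ⟨u, hu, hub, huE, husum, hunorm⟩ := exists_smooth_approx p.integrable p.bdd p.memLp_fc
    ((measSupport_subset_iff p.cpt.isClosed).1 p.supp) M hδ hη₂
  have hufc := memLp_weightMeasure_of_eLpNorm_sub_lt p.memLp_fc hunorm
  obtain ⟨v, hv, hvb, huv, hvx₀, hvnorm⟩ :=
    exists_punctured_approx h hlam hC hdiv hu hub hufc husum x₀ hη₂
  refine ⟨v, hv, hvb, fun x hx => huv x (huE x hx), hvx₀, ?_⟩
  calc eLpNorm (fc v - fc p.f) 2 (weightMeasure lam)
      = eLpNorm ((fc v - fc u) + (fc u - fc p.f)) 2 (weightMeasure lam) := by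
        rw [sub_add_sub_cancel]
    _ ≤ _ := eLpNorm_add_le (hmeas _) (hmeas _) one_le_two
    _ < η / 2 + η / 2 := ENNReal.add_lt_add hvnorm hunorm
    _ = η := ENNReal.add_halves η

lemma dense_setOf_notMem (h : IsModerate lam C M) (hlam : ∀ n, 0 < lam n) (hC : 0 ≤ C)
    (hdiv : ¬Summable fun n => 1 / lam (n + 1)) (x₀ : UnitAddCircle) :
    Dense {p : LPair lam | x₀ ∉ p.E} := by
  refine Metric.dense_iff.2 fun p ε hε => ?_
  obtain ⟨v, hv, hvb, hvE, hvx₀, hvnorm⟩ := p.exists_approx_eventually_eq_zero h hlam hC hdiv x₀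
    (half_pos hε) (ENNReal.ofReal_pos.2 hε)
  obtain ⟨ρ, hρ, hvρ⟩ := Metric.eventually_nhds_iff_ball.1 hvx₀
  obtain ⟨r, hr, hrmin⟩ := exists_between (lt_min hρ (lt_min one_half_pos (div_pos hε four_pos)))
  obtain ⟨hrρ, hr', hrε⟩ : r < ρ ∧ r < 1 / 2 ∧ r < ε / 4 := by simpa only [lt_min_iff] using hrmin
  have hrδ : 2 * r ≤ ε / 2 := by linarith
  set K := Metric.cthickening (ε / 2) p.E \ Metric.ball x₀ r
  have hK : IsClosed K := Metric.isClosed_cthickening.sdiff Metric.isOpen_ball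
  have hvK (x : UnitAddCircle) (hx : x ∉ K) : v x = 0 := by
    by_cases hxr : x ∈ Metric.ball x₀ r
    · exact hvρ x (Metric.ball_subset_ball hrρ.le hxr)
    · exact hvE x fun hxE => hx ⟨hxE, hxr⟩
  let q : LPair lam :=
    { f := v
      E := K
      memLp := hv.memLp_of_hasCompactSupport (HasCompactSupport.of_compactSpace v)
      bdd := Eventually.of_forall hvb
      sum := (memLp_weightMeasure_iff (fun n => (hlam n).le) _).1
        (memLp_weightMeasure_of_eLpNorm_sub_lt p.memLp_fc hvnorm)
      cpt := hK.isCompact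
      nonempty := p.nonempty.elim fun e he =>
        (exists_mem_cthickening_diff_ball hr.le hr'.le hrδ x₀ he).imp fun _ => And.left
      supp := (measSupport_subset_iff hK).2 (Eventually.of_forall hvK) }
  refine ⟨q, ?_, fun hx₀ => hx₀.2 (Metric.mem_ball_self hr)⟩
  rw [Metric.mem_ball, dist_eq_max]
  refine max_lt (ENNReal.toReal_lt_of_lt_ofReal hvnorm) ?_
  rw [Metric.hausdorffDist_comm]
  exact (hausdorffDist_cthickening_diff_ball_le p.cpt hr.le hr'.le hrδ x₀).trans_lt
    (half_lt_self hε)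

end LPair

end Density

/-- Baire category. Under `Σ 1/λ_n = ∞`, the doubling condition and
`λ_n ≥ 1`, the set of pairs `(f,E)` in `X` for which `E` has empty interior is comeagre:
it contains a countable intersection of `d_λ`-open, `d_λ`-dense subsets of `X`, and this
intersection is itself `d_λ`-dense. -/
theorem statement16 (lam : ℕ → ℝ) (hlam : ∀ n, 1 ≤ lam n)
    (hdiv : ¬ Summable (fun n : ℕ => 1 / lam (n + 1)))
    (hdbl : ∃ C : ℝ, 1 < C ∧ ∀ n k : ℕ, 1 ≤ n → n ≤ k → k ≤ 2 * n →
      C⁻¹ * lam n ≤ lam k ∧ lam k ≤ C * lam n) :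
    ∃ G : ℕ → Set (LPair lam),
      (∀ k, ∀ p ∈ G k, ∃ η : ℝ, 0 < η ∧ ∀ q : LPair lam, dPair lam p q < η → q ∈ G k) ∧
      (∀ k, ∀ p : LPair lam, ∀ η : ℝ, 0 < η → ∃ q ∈ G k, dPair lam p q < η) ∧
      (∀ p : LPair lam, ∀ η : ℝ, 0 < η → ∃ q ∈ ⋂ k, G k, dPair lam p q < η) ∧
      (⋂ k, G k) ⊆ {p : LPair lam | interior p.E = (∅ : Set UnitAddCircle)} := by
  have hpos (n : ℕ) : 0 < lam n := zero_lt_one.trans_le (hlam n)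
  have hnonneg (n : ℕ) : 0 ≤ lam n := (hpos n).le
  obtain ⟨C, hC, hdbl⟩ := hdbl
  obtain ⟨D, M, hD, hmoderate⟩ := exists_isModerate hpos hC hdbl
  have := LPair.completeSpace hlam
  let d := TopologicalSpace.denseSeq UnitAddCircle
  let G (k : ℕ) : Set (LPair lam) := {p | d k ∉ p.E}
  have hopen (k : ℕ) : IsOpen (G k) := LPair.isOpen_setOf_notMem (d k)
  have hdense (k : ℕ) : Dense (G k) :=
    LPair.dense_setOf_notMem hmoderate hpos hD.le hdiv (d k)
  have hbaire : Dense (⋂ k, G k) := dense_iInter_of_isOpen_nat hopen hdense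
  refine ⟨G, fun k _ hp => LPair.exists_dPair_lt_imp_mem hnonneg (hopen k) hp,
    fun k p _ hη => LPair.exists_mem_dPair_lt hnonneg (hdense k) p hη,
    fun p _ hη => LPair.exists_mem_dPair_lt hnonneg hbaire p hη, fun p hp => ?_⟩
  have hrange : Set.range d ⊆ p.Eᶜ := Set.range_subset_iff.2 (Set.mem_iInter.1 hp)
  exact interior_eq_empty_iff_dense_compl.2
    ((TopologicalSpace.denseRange_denseSeq UnitAddCircle).mono hrange)
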